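/- In the transfer-operator setting below, let μ be an integer with 2^{−μ+6}‖ξ‖ ≤ ‖(DS_x)^{tr}ξ‖ ≤ 2^{μ−6}‖ξ‖ for all x ∈ K and ξ ∈ ℝ², and let ν ≤ μ−6 be an integer with 2^{ν−1} < Λ(S,Θ',K) ≤ 2^ν. Write (m,τ) ↪ (n,σ) if either (τ,σ) = (+,+) and m−μ ≤ n ≤ max{0, m+ν+6}, or (τ,σ) ∈ {(−,−),(+,−)} and m−μ ≤ n ≤ m+μ. Then there exists a constant C such that for all u ∈ C^r(R), all n, m ≥ 0 and all σ, τ ∈ {+,−} with (m,τ) ↪̸ (n,σ): ‖ψ_{Θ',n,σ}(D)(L(u_{Θ,m,τ}))‖_{L²} ≤ C·2^{−(r−1)·max{m,n}}·‖u_{Θ,m,τ}‖_{L²}. -/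

import Mathlib

noncomputable section
open MeasureTheory Filter Finset Function Set Real Topology
open scoped ENNReal NNReal

namespace AngleMult

/-! ### Anisotropic Sobolev norms on `ℝ²` -/

/-- Euclidean magnitude on `ℝ × ℝ`. -/
def en (v : ℝ × ℝ) : ℝ := Real.sqrt (v.1 ^ 2 + v.2 ^ 2)

/-- Fourier transform on `ℝ²`. -/
def FT (u : ℝ × ℝ → ℂ) (ξ : ℝ × ℝ) : ℂ :=
  ∫ x : ℝ × ℝ, Complex.exp (-(2 * Real.pi * (x.1 * ξ.1 + x.2 * ξ.2)) * Complex.I) * u x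

/-- Inverse Fourier transform on `ℝ²`. -/
def invFT (u : ℝ × ℝ → ℂ) (x : ℝ × ℝ) : ℂ :=
  ∫ ξ : ℝ × ℝ, Complex.exp ((2 * Real.pi * (x.1 * ξ.1 + x.2 * ξ.2)) * Complex.I) * u ξ

/-- The rectangle `R = (-η,η) × (δ,2δ)`. -/
def Rset (η δ : ℝ) : Set (ℝ × ℝ) := Set.Ioo (-η) η ×ˢ Set.Ioo δ (2 * δ)

/-- The rectangle `Q = (-2η,2η) × (0,3δ)`. -/
def Qset (η δ : ℝ) : Set (ℝ × ℝ) := Set.Ioo (-(2 * η)) (2 * η) ×ˢ Set.Ioo 0 (3 * δ)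

/-- `C ⋐ C'`: the closure of `C` is contained in the interior of `C'` except for the
origin. -/
def Csub (C C' : Set (ℝ × ℝ)) : Prop := closure C \ {0} ⊆ interior C'

/-- A polarization `Θ = (C₊, C₋, φ₊, φ₋)`: a pair of closed cones intersecting only at `0`
together with smooth functions on the unit circle (encoded as positively homogeneous
functions of degree `0` on `ℝ² ∖ {0}`) adapted to them. -/
structure Polarization where
  Cp : Set (ℝ × ℝ)
  Cm : Set (ℝ × ℝ)
  phip : ℝ × ℝ → ℝ
  phim : ℝ × ℝ → ℝ
  closed_p : IsClosed Cp
  closed_m : IsClosed Cm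
  cone_p : ∀ (c : ℝ) v, v ∈ Cp → c • v ∈ Cp
  cone_m : ∀ (c : ℝ) v, v ∈ Cm → c • v ∈ Cm
  inter_eq : Cp ∩ Cm = {0}
  smooth_p : ContDiffOn ℝ (⊤ : ℕ∞) phip {v : ℝ × ℝ | v ≠ 0}
  smooth_m : ContDiffOn ℝ (⊤ : ℕ∞) phim {v : ℝ × ℝ | v ≠ 0}
  homog_p : ∀ c : ℝ, 0 < c → ∀ v, phip (c • v) = phip v
  mem_Icc_p : ∀ v, phip v ∈ Set.Icc (0 : ℝ) 1
  one_on_p : ∀ v ∈ Cp, v ≠ 0 → phip v = 1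
  zero_on_m : ∀ v ∈ Cm, v ≠ 0 → phip v = 0
  phim_def : ∀ v, phim v = 1 - phip v

/-- The order `Θ < Θ'` on polarizations: `ℝ² ∖ C'₊ ⋐ C₋`. -/
def PolLt (Θ Θ' : Polarization) : Prop := Csub (Set.univ \ Θ'.Cp) Θ.Cm

/-- Admissibility of the fixed bump function `χ`. -/
def ChiOK (χ : ℝ → ℝ) : Prop :=
  ContDiff ℝ (⊤ : ℕ∞) χ ∧ (∀ s ≤ (1 : ℝ), χ s = 1) ∧ (∀ s, (2 : ℝ) ≤ s → χ s = 0) ∧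
    ∀ s, χ s ∈ Set.Icc (0 : ℝ) 1

/-- The Littlewood-Paley functions `ψ_{Θ,n,σ}` (`σ = true` is `+`, `σ = false` is `-`). -/
def psiLP (χ : ℝ → ℝ) (Θ : Polarization) (n : ℕ) (σ : Bool) (ξ : ℝ × ℝ) : ℝ :=
  if n = 0 then χ (en ξ) / 2
  else (if σ then Θ.phip ξ else Θ.phim ξ) *
    (χ ((2 : ℝ) ^ (-(n : ℤ)) * en ξ) - χ ((2 : ℝ) ^ (-(n : ℤ) + 1) * en ξ))

/-- The pseudo-differential operator `ψ_{Θ,n,σ}(D) u = 𝓕⁻¹(ψ_{Θ,n,σ} · 𝓕u)`. -/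
def psiD (χ : ℝ → ℝ) (Θ : Polarization) (n : ℕ) (σ : Bool) (u : ℝ × ℝ → ℂ) :
    ℝ × ℝ → ℂ :=
  invFT fun ξ => (psiLP χ Θ n σ ξ : ℂ) * FT u ξ

/-- The partial norm `‖u‖^σ_{Θ,p} = (∑_n 2^{2pn} ‖ψ_{Θ,n,σ}·𝓕u‖²_{L²})^{1/2}`
(`ℝ≥0∞`-valued). -/
def segNorm (χ : ℝ → ℝ) (Θ : Polarization) (p : ℝ) (σ : Bool) (u : ℝ × ℝ → ℂ) : ℝ≥0∞ :=
  (∑' n : ℕ, ENNReal.ofReal ((2 : ℝ) ^ (2 * p * (n : ℝ))) *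
      (eLpNorm (fun ξ => (psiLP χ Θ n σ ξ : ℂ) * FT u ξ) 2 volume) ^ 2) ^ (1 / 2 : ℝ)

/-- The anisotropic Sobolev norm `‖u‖_{Θ,p,q}`. -/
def anorm (χ : ℝ → ℝ) (Θ : Polarization) (p q : ℝ) (u : ℝ × ℝ → ℂ) : ℝ≥0∞ :=
  ((segNorm χ Θ p true u) ^ 2 + (segNorm χ Θ q false u) ^ 2) ^ (1 / 2 : ℝ)

/-- The (usual) Sobolev norm of order `s` of `u`, via the Fourier transform. -/
def wnorm (s : ℝ) (u : ℝ × ℝ → ℂ) : ℝ≥0∞ :=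
  eLpNorm (fun ξ => ((1 + en ξ ^ 2) ^ (s / 2) : ℝ) * FT u ξ) 2 volume

/-- `u ∈ C^r(R)`: a `C^r` function supported in `R`. -/
def CrSupp (r : ℕ) (η δ : ℝ) (u : ℝ × ℝ → ℂ) : Prop :=
  ContDiff ℝ r u ∧ Function.support u ⊆ Rset η δ

/-- `u ∈ C^∞(R)`: a `C^∞` function supported in `R`. -/
def SmoothSupp (η δ : ℝ) (u : ℝ × ℝ → ℂ) : Prop :=
  ContDiff ℝ (⊤ : ℕ∞) u ∧ Function.support u ⊆ Rset η δ

/-! ### Transfer operators on local charts -/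

/-- The transpose `Aᵀ` (for the Euclidean structure) of a linear map on `ℝ²`. -/
def transApp (A : (ℝ × ℝ) →L[ℝ] (ℝ × ℝ)) (v : ℝ × ℝ) : ℝ × ℝ :=
  ((A (1, 0)).1 * v.1 + (A (1, 0)).2 * v.2, (A (0, 1)).1 * v.1 + (A (0, 1)).2 * v.2)

/-- The determinant of a linear map on `ℝ²`. -/
def det2 (A : (ℝ × ℝ) →L[ℝ] (ℝ × ℝ)) : ℝ :=
  (A (1, 0)).1 * (A (0, 1)).2 - (A (1, 0)).2 * (A (0, 1)).1

/-- The transfer operator `L u = h · (u ∘ S)` on `K`, `0` elsewhere. -/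
def Lop (K : Set (ℝ × ℝ)) (h : ℝ × ℝ → ℝ) (S : ℝ × ℝ → ℝ × ℝ) (u : ℝ × ℝ → ℂ) :
    ℝ × ℝ → ℂ :=
  K.indicator fun x => (h x : ℂ) * u (S x)

/-- The hypotheses of the transfer-operator setting: `K ⊂ R` closed, `h` a `C^{r-1}`
function supported in `K`, `S` a `C^r` diffeomorphism onto its image defined on a
neighborhood `U` of `K`, with `(DS_ζ)ᵀ(ℝ² ∖ C₊) ⋐ C'₋` for all `ζ ∈ K`. -/
def TransferHyp (r : ℕ) (η δ : ℝ) (Θ Θ' : Polarization) (K : Set (ℝ × ℝ))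
    (h : ℝ × ℝ → ℝ) (S : ℝ × ℝ → ℝ × ℝ) : Prop :=
  IsClosed K ∧ K ⊆ Rset η δ ∧
  ContDiff ℝ (r - 1 : ℕ) h ∧ Function.support h ⊆ K ∧
  (∃ U : Set (ℝ × ℝ), IsOpen U ∧ K ⊆ U ∧ ContDiffOn ℝ r S U ∧ Set.InjOn S U ∧
    ∀ ζ ∈ U, det2 (fderiv ℝ S ζ) ≠ 0) ∧
  ∀ ζ ∈ K, Csub (transApp (fderiv ℝ S ζ) '' (Set.univ \ Θ.Cp)) Θ'.Cm

/-- `γ(S) = min_{ζ ∈ K} |det DS_ζ|`. -/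
def gammaS (K : Set (ℝ × ℝ)) (S : ℝ × ℝ → ℝ × ℝ) : ℝ :=
  sInf {c : ℝ | ∃ ζ ∈ K, c = |det2 (fderiv ℝ S ζ)|}

/-- `Λ(S,Θ',K) = sup{‖(DS_ζ)ᵀ v‖/‖v‖ : ζ ∈ K, (DS_ζ)ᵀ v ∉ C'₋}`. -/
def LambdaS (K : Set (ℝ × ℝ)) (S : ℝ × ℝ → ℝ × ℝ) (Θ' : Polarization) : ℝ :=
  sSup {c : ℝ | ∃ ζ ∈ K, ∃ v : ℝ × ℝ,
    transApp (fderiv ℝ S ζ) v ∉ Θ'.Cm ∧ c = en (transApp (fderiv ℝ S ζ) v) / en v}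

/-- `‖h‖_{L^∞}`. -/
def supNorm (h : ℝ × ℝ → ℝ) : ℝ := sSup {c : ℝ | ∃ x, c = |h x|}

/-- The relation `(m,τ) ↪ (n,σ)` of Appendix B. -/
def Hook (μ ν : ℤ) (m : ℕ) (τ : Bool) (n : ℕ) (σ : Bool) : Prop :=
  (τ = true ∧ σ = true ∧ (m : ℤ) - μ ≤ (n : ℤ) ∧ (n : ℤ) ≤ max 0 ((m : ℤ) + ν + 6)) ∨
  (σ = false ∧ (m : ℤ) - μ ≤ (n : ℤ) ∧ (n : ℤ) ≤ (m : ℤ) + μ)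

/-!
On the frequency side the transfer operator becomes the bilinear form
`∫ h(w) 𝓕f(S w) 𝓕φ(w) dw`, where `f` and `φ` are supported in the two Littlewood-Paley pieces. At
frequencies `(ξ, ζ)` its phase is `⟪ξ, S w⟫ + ⟪ζ, w⟫` up to a constant factor, with gradient
`(DS_w)ᵀ ξ + ζ`. When `(m,τ) ↪̸ (n,σ)` and `max m n > μ`, the supports rescaled by `2^(-max m n)` lie
in a compact set on which this gradient does not vanish, and `r - 1` integrations by parts gain
`2^(-(r-1) max m n)`. To stay in `L²`, the frequencies are decomposed into small cells and one
integrates by parts with the phase frozen at the centre of a cell: the recentring errors carry a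
factor proportional to the size of the cell and are absorbed. When `max m n ≤ μ` the plain `L²`
boundedness of the form suffices.
-/

open scoped FourierTransform RealInnerProductSpace ContDiff

section Fourier

variable {E : Type*} [NormedAddCommGroup E] [InnerProductSpace ℝ E] [FiniteDimensional ℝ E]
  [MeasurableSpace E] [BorelSpace E] {f g : E → ℂ}

lemma continuous_fourier_of_integrable (hf : Integrable f) : Continuous (𝓕 f) :=
  VectorFourier.fourierIntegral_continuous Real.continuous_fourierChar
    (innerSL ℝ (E := E)).continuous₂ hf

lemma fourier_const_smul (a : ℂ) (f : E → ℂ) : 𝓕 (a • f) = a • 𝓕 f :=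
  VectorFourier.fourierIntegral_const_smul ..

lemma fourier_sum {ι : Type*} (s : Finset ι) {f : ι → E → ℂ} (hf : ∀ i ∈ s, Integrable (f i)) :
    𝓕 (∑ i ∈ s, f i) = ∑ i ∈ s, 𝓕 (f i) := by
  ext x
  simp only [Real.fourier_eq, Finset.sum_apply, Finset.smul_sum]
  exact integral_finsetSum _ fun i hi ↦ (Real.fourierIntegral_convergent_iff x).2 (hf i hi)

lemma integral_fourier_mul_eq_flip (hf : Integrable f) (hg : Integrable g) :
    ∫ x, 𝓕 f x * g x = ∫ x, f x * 𝓕 g x := by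
  have h := VectorFourier.integral_fourierIntegral_smul_eq_flip (L := innerₗ E)
    Real.continuous_fourierChar (innerSL ℝ (E := E)).continuous₂ hf hg
  rwa [flip_innerₗ] at h

lemma fourier_ae_eq_fourier_toLp (h₁ : Integrable f) (h₂ : MemLp f 2) :
    𝓕 f =ᵐ[volume] (𝓕 (h₂.toLp f) : Lp ℂ 2 (volume : Measure E)) := by
  refine ae_eq_of_integral_contDiff_smul_eq
    (continuous_fourier_of_integrable h₁).locallyIntegrable
    ((Lp.memLp _).locallyIntegrable (by norm_num)) fun g hg hgc ↦ ?_
  have hgc' : HasCompactSupport fun x ↦ (g x : ℂ) := hgc.comp_left (g := Complex.ofReal) rfl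
  have hg' : ContDiff ℝ ∞ fun x ↦ (g x : ℂ) := Complex.ofRealCLM.contDiff.comp hg
  let G := hgc'.toSchwartzMap hg'
  have hdistr := congrArg (fun T ↦ T G) (Lp.fourier_toTemperedDistribution_eq (h₂.toLp f))
  simp only [TemperedDistribution.fourier_apply, Lp.toTemperedDistribution_apply] at hdistr
  calc ∫ x, g x • 𝓕 f x = ∫ x, G x * 𝓕 f x := rfl
    _ = ∫ x, 𝓕 G x * f x := by
        rw [SchwartzMap.fourier_coe, integral_fourier_mul_eq_flip G.integrable h₁]
    _ = ∫ x, 𝓕 G x • h₂.toLp f x := integral_congr_ae <| by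
        filter_upwards [h₂.coeFn_toLp] with x hx using by rw [hx, smul_eq_mul]
    _ = ∫ x, G x • (𝓕 (h₂.toLp f) : Lp ℂ 2 (volume : Measure E)) x := hdistr

theorem eLpNorm_fourier (h₁ : Integrable f) (h₂ : MemLp f 2) :
    eLpNorm (𝓕 f) 2 volume = eLpNorm f 2 volume := by
  rw [eLpNorm_congr_ae (fourier_ae_eq_fourier_toLp h₁ h₂), ← eLpNorm_congr_ae h₂.coeFn_toLp]
  have h := Lp.norm_fourier_eq (h₂.toLp f)
  rw [Lp.norm_def, Lp.norm_def] at h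
  exact (ENNReal.toReal_eq_toReal_iff' (Lp.eLpNorm_ne_top _) (Lp.eLpNorm_ne_top _)).1 h

theorem eLpNorm_fourierInv (h₁ : Integrable f) (h₂ : MemLp f 2) :
    eLpNorm (𝓕⁻ f) 2 volume = eLpNorm f 2 volume := by
  have hneg : 𝓕⁻ f = 𝓕 f ∘ Neg.neg := funext (Real.fourierInv_eq_fourier_neg f)
  rw [hneg, eLpNorm_comp_measurePreserving
    (continuous_fourier_of_integrable h₁).aestronglyMeasurable
    (Measure.measurePreserving_neg volume), eLpNorm_fourier h₁ h₂]

end Fourier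

section LpNorm

variable {α : Type*} {m : MeasurableSpace α} {μ : Measure α} {p : ℝ≥0∞}

lemma lpNorm_le_mul_lpNorm_of_norm_le {F G : Type*} [NormedAddCommGroup F] [NormedAddCommGroup G]
    {f : α → F} {g : α → G} {c : ℝ} (hc : 0 ≤ c) (hf : MemLp f p μ)
    (h : ∀ x, ‖g x‖ ≤ c * ‖f x‖) : lpNorm g p μ ≤ c * lpNorm f p μ := by
  refine (lpNorm_mono_real (hf.norm.const_mul c) h).trans_eq ?_
  have hsmul := lpNorm_const_smul (p := p) c (fun x ↦ ‖f x‖) μ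
  rw [lpNorm_norm hf.1, coe_nnnorm, Real.norm_of_nonneg hc] at hsmul
  exact hsmul

lemma norm_integral_mul_le_lpNorm_mul_lpNorm {f g : α → ℂ} (hf : MemLp f 2 μ) (hg : MemLp g 2 μ) :
    ‖∫ x, f x * g x ∂μ‖ ≤ lpNorm f 2 μ * lpNorm g 2 μ := by
  rw [← toReal_eLpNorm hf.1, ← toReal_eLpNorm hg.1, ← ENNReal.toReal_mul, ← toReal_enorm]
  refine ENNReal.toReal_mono (ENNReal.mul_ne_top hf.2.ne hg.2.ne) ?_
  calc ‖∫ x, f x * g x ∂μ‖ₑ ≤ ∫⁻ x, ‖(f • g) x‖ₑ ∂μ := enorm_integral_le_lintegral_enorm _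
    _ = eLpNorm (f • g) 1 μ := eLpNorm_one_eq_lintegral_enorm.symm
    _ ≤ eLpNorm f 2 μ * eLpNorm g 2 μ := eLpNorm_smul_le_mul_eLpNorm hg.1 hf.1

lemma memLp_comp_of_map_le {β : Type*} {m' : MeasurableSpace β} {ν : Measure β} {c : ℝ≥0}
    {S : α → β} (hS : AEMeasurable S μ) (hmap : μ.map S ≤ c • ν) {g : β → ℂ} (hg : MemLp g 2 ν) :
    MemLp (g ∘ S) 2 μ ∧ lpNorm (g ∘ S) 2 μ ≤ √c * lpNorm g 2 ν := by
  have hgc : MemLp g 2 (c • ν) := hg.smul_measure ENNReal.coe_ne_top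
  have hgS : MemLp g 2 (μ.map S) := hgc.mono_measure hmap
  refine ⟨hgS.comp_of_map hS, ?_⟩
  calc lpNorm (g ∘ S) 2 μ = lpNorm g 2 (μ.map S) := by
        rw [← toReal_eLpNorm (hgS.comp_of_map hS).1, ← toReal_eLpNorm hgS.1,
          eLpNorm_map_measure hgS.1 hS]
    _ ≤ lpNorm g 2 (c • ν) := by
        rw [← toReal_eLpNorm hgS.1, ← toReal_eLpNorm hgc.1]
        exact ENNReal.toReal_mono hgc.2.ne (eLpNorm_mono_measure g hmap)
    _ = √c * lpNorm g 2 ν := by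
        rw [lpNorm_smul_measure_of_ne_top (by norm_num), Real.sqrt_eq_rpow, NNReal.smul_def]
        norm_num

end LpNorm

section Pushforward

variable {E : Type*} [NormedAddCommGroup E] [NormedSpace ℝ E] [FiniteDimensional ℝ E]
  [MeasurableSpace E] [BorelSpace E]

lemma exists_map_restrict_le_smul (μ : Measure E) [μ.IsAddHaarMeasure] {K : Set E} {S : E → E}
    (hK : IsCompact K) (hS : ∀ x ∈ K, DifferentiableAt ℝ S x) (hS' : ContinuousOn (fderiv ℝ S) K)
    (hinj : InjOn S K) (hdet : ∀ x ∈ K, (fderiv ℝ S x).det ≠ 0) :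
    ∃ c : ℝ≥0, (μ.restrict K).map S ≤ c • μ := by
  obtain ⟨d, hd, hdK⟩ : ∃ d : ℝ, 0 < d ∧ ∀ x ∈ K, d ≤ |(fderiv ℝ S x).det| :=
    hK.exists_forall_le' (ContinuousLinearMap.continuous_det.comp_continuousOn hS').abs
      fun x hx ↦ abs_pos.2 (hdet x hx)
  have hSm : AEMeasurable S (μ.restrict K) :=
    (continuousOn_of_forall_continuousAt fun x hx ↦ (hS x hx).continuousAt).aemeasurable
      hK.measurableSet
  have hdens : ENNReal.ofReal d • μ.restrict K ≤
      (μ.restrict K).withDensity fun x ↦ ENNReal.ofReal |(fderiv ℝ S x).det| := by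
    rw [← withDensity_const]
    refine withDensity_mono ?_
    filter_upwards [ae_restrict_mem hK.measurableSet] with x hx
    exact ENNReal.ofReal_le_ofReal (hdK x hx)
  have hle : ENNReal.ofReal d • (μ.restrict K).map S ≤ μ := calc
    _ = (ENNReal.ofReal d • μ.restrict K).map S := (Measure.map_smul ..).symm
    _ ≤ ((μ.restrict K).withDensity fun x ↦ ENNReal.ofReal |(fderiv ℝ S x).det|).map S :=
        Measure.map_mono_of_aemeasurable hdens
          (hSm.mono_ac (withDensity_absolutelyContinuous _ _))
    _ = μ.restrict (S '' K) := map_withDensity_abs_det_fderiv_eq_addHaar μ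
        hK.measurableSet.nullMeasurableSet
        (fun x hx ↦ (hS x hx).hasFDerivAt.hasFDerivWithinAt) hinj
    _ ≤ μ := Measure.restrict_le_self
  refine ⟨(Real.toNNReal d)⁻¹, Measure.le_iff'.2 fun s ↦ ?_⟩
  have hs : ENNReal.ofReal d * (μ.restrict K).map S s ≤ μ s := Measure.le_iff'.1 hle s
  rw [Measure.smul_apply, ENNReal.smul_def, smul_eq_mul, ENNReal.coe_inv (by simpa using hd)]
  rw [mul_comm] at hs
  rw [mul_comm, ← div_eq_mul_inv]
  exact (ENNReal.le_div_iff_mul_le (by simp [hd]) (by simp)).2 hs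

end Pushforward

section Amplitudes

variable {E : Type*} [NormedAddCommGroup E] [InnerProductSpace ℝ E] [MeasurableSpace E]
  [BorelSpace E] [FiniteDimensional ℝ E] {f : E → ℂ}

/-- Square integrable functions of compact support. They play the role of frequency-localized
amplitudes: their Fourier transforms are smooth and square integrable. -/
structure MemL2c (f : E → ℂ) : Prop where
  memLp : MemLp f 2
  hasCompactSupport : HasCompactSupport f

namespace MemL2c

lemma integrable (hf : MemL2c f) : Integrable f := by
  rw [← integrableOn_iff_integrable_of_support_subset (subset_tsupport f)]
  have : IsFiniteMeasure (volume.restrict (tsupport f)) :=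
    ⟨by simpa using IsCompact.measure_lt_top hf.hasCompactSupport⟩
  exact (hf.memLp.restrict _).integrable (by norm_num)

lemma continuous_smul (hf : MemL2c f) {a : E → ℝ} (ha : Continuous a) :
    MemL2c fun ξ ↦ a ξ • f ξ := by
  obtain ⟨c, hc⟩ := IsCompact.exists_bound_of_continuousOn hf.hasCompactSupport ha.continuousOn
  refine ⟨hf.memLp.of_le_mul (c := c) (ha.aestronglyMeasurable.smul hf.memLp.1)
    (.of_forall fun ξ ↦ ?_), hf.hasCompactSupport.mono <| support_smul_subset_right a f⟩
  by_cases hξ : f ξ = 0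
  · simp [hξ]
  · rw [norm_smul]
    gcongr
    exact hc ξ (subset_tsupport f hξ)

lemma indicator (hf : MemL2c f) {s : Set E} (hs : MeasurableSet s) : MemL2c (s.indicator f) :=
  ⟨hf.memLp.indicator hs, hf.hasCompactSupport.mono <| by
    rw [support_indicator]; exact inter_subset_right⟩

lemma comp_neg (hf : MemL2c f) : MemL2c (f ∘ Neg.neg) :=
  ⟨hf.memLp.comp_measurePreserving (Measure.measurePreserving_neg volume),
    hf.hasCompactSupport.comp_homeomorph (Homeomorph.neg E)⟩

lemma continuous_fourier (hf : MemL2c f) : Continuous (𝓕 f) :=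
  continuous_fourier_of_integrable hf.integrable

lemma memLp_fourier (hf : MemL2c f) : MemLp (𝓕 f) 2 :=
  ⟨hf.continuous_fourier.aestronglyMeasurable, by
    rw [eLpNorm_fourier hf.integrable hf.memLp]; exact hf.memLp.2⟩

lemma lpNorm_fourier (hf : MemL2c f) : lpNorm (𝓕 f) 2 volume = lpNorm f 2 volume := by
  rw [← toReal_eLpNorm hf.memLp_fourier.1, ← toReal_eLpNorm hf.memLp.1,
    eLpNorm_fourier hf.integrable hf.memLp]

end MemL2c

/-- Multiplication by `⟪ξ - c, v⟫`. On the Fourier side this is, up to a constant, the derivative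
in direction `v` with its value at the frequency `c` subtracted; it is small on amplitudes
concentrated near `c`. -/
def recenter (c v : E) (f : E → ℂ) (ξ : E) : ℂ := ⟪ξ - c, v⟫ • f ξ

omit [MeasurableSpace E] [BorelSpace E] [FiniteDimensional ℝ E] in
lemma support_recenter_subset (c v : E) (f : E → ℂ) : support (recenter c v f) ⊆ support f :=
  support_smul_subset_right (fun ξ ↦ ⟪ξ - c, v⟫) f

lemma MemL2c.recenter (hf : MemL2c f) (c v : E) : MemL2c (recenter c v f) :=
  hf.continuous_smul (by fun_prop)

lemma lpNorm_recenter_le (hf : MemL2c f) {c v : E} {e : ℝ} (he : 0 ≤ e)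
    (hsupp : support f ⊆ Metric.closedBall c e) :
    lpNorm (recenter c v f) 2 volume ≤ e * ‖v‖ * lpNorm f 2 volume := by
  refine lpNorm_le_mul_lpNorm_of_norm_le (by positivity) hf.memLp fun ξ ↦ ?_
  by_cases hξ : f ξ = 0
  · simp [AngleMult.recenter, hξ]
  · rw [AngleMult.recenter, norm_smul]
    gcongr
    exact (norm_inner_le_norm _ _).trans
      (by gcongr; exact mem_closedBall_iff_norm.1 (hsupp hξ))

lemma MemL2c.hasFDerivAt_fourier (hf : MemL2c f) (x : E) :
    HasFDerivAt (𝓕 f) (𝓕 (VectorFourier.fourierSMulRight (innerSL ℝ) f) x) x := by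
  refine Real.hasFDerivAt_fourier hf.integrable ?_ x
  simpa using (hf.continuous_smul continuous_norm).integrable.norm

lemma MemL2c.differentiable_fourier (hf : MemL2c f) : Differentiable ℝ (𝓕 f) :=
  fun x ↦ (hf.hasFDerivAt_fourier x).differentiableAt

lemma MemL2c.fderiv_fourier_apply (hf : MemL2c f) (c x v : E) :
    fderiv ℝ (𝓕 f) x v =
      -(2 * π * Complex.I) * (⟪c, v⟫ • 𝓕 f x + 𝓕 (AngleMult.recenter c v f) x) := by
  have hint : Integrable (VectorFourier.fourierSMulRight (innerSL ℝ) f) := by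
    refine ((hf.continuous_smul continuous_norm).integrable.norm.const_mul
      (2 * π * ‖innerSL ℝ (E := E)‖)).mono' hf.integrable.1.fourierSMulRight
      (.of_forall fun ξ ↦ ?_)
    refine (VectorFourier.norm_fourierSMulRight_le (innerSL ℝ) f ξ).trans_eq ?_
    rw [norm_smul, norm_norm, mul_assoc]
  have hsplit : (fun ξ ↦ VectorFourier.fourierSMulRight (innerSL ℝ) f ξ v) =
      (-(2 * π * Complex.I) : ℂ) • ((⟪c, v⟫ : ℂ) • f + AngleMult.recenter c v f) := by
    ext ξ
    change -(2 * π * Complex.I) • ⟪ξ, v⟫ • f ξ = _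
    simp only [AngleMult.recenter, inner_sub_left, Pi.smul_apply, Pi.add_apply, Complex.real_smul,
      smul_eq_mul]
    push_cast
    ring
  have hadd : 𝓕 ((⟪c, v⟫ : ℂ) • f + AngleMult.recenter c v f) =
      𝓕 ((⟪c, v⟫ : ℂ) • f) + 𝓕 (AngleMult.recenter c v f) :=
    VectorFourier.fourierIntegral_add Real.continuous_fourierChar
      (innerSL ℝ (E := E)).continuous₂ (hf.integrable.smul _) (hf.recenter c v).integrable
  rw [(hf.hasFDerivAt_fourier x).fderiv, Real.fourier_continuousLinearMap_apply hint, hsplit,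
    fourier_const_smul, hadd, fourier_const_smul]
  rfl

end Amplitudes

lemma integrable_smul_of_compact_support {X : Type*} [TopologicalSpace X] [R1Space X]
    [MeasurableSpace X] [OpensMeasurableSpace X] {μ : Measure X} [IsFiniteMeasureOnCompacts μ]
    {K : Set X} {H : X → ℝ} {g : X → ℂ} (hK : IsCompact K) (hH : Continuous H)
    (hHK : support H ⊆ K) (hg : Continuous g) :
    Integrable (fun w ↦ H w • g w) μ :=
  (hH.smul hg).integrable_of_hasCompactSupport
    (.intro hK fun w hw ↦ by simp [notMem_support.1 fun h ↦ hw (hHK h)])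

section TransferForm

variable {E F : Type*} [NormedAddCommGroup E] [InnerProductSpace ℝ E] [FiniteDimensional ℝ E]
  [MeasurableSpace E] [BorelSpace E] [NormedAddCommGroup F] [InnerProductSpace ℝ F]
  [FiniteDimensional ℝ F] [MeasurableSpace F] [BorelSpace F]
  {S : E → F} {H : E → ℝ} {f : F → ℂ} {φ : E → ℂ} {K : Set E} {c : ℝ≥0} {A : ℝ}

/-- The oscillatory bilinear form `∫ H(w) 𝓕f(S w) 𝓕φ(w) dw`, that is, the matrix coefficients on
the frequency side of the transfer operator `u ↦ H · (u ∘ S)`. Its phase at the frequencies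
`(ξ, ζ)` is `-2π (⟪ξ, S w⟫ + ⟪ζ, w⟫)`. -/
def transferForm (S : E → F) (H : E → ℝ) (f : F → ℂ) (φ : E → ℂ) : ℂ :=
  ∫ w, H w • (𝓕 f (S w) * 𝓕 φ w)

lemma integrable_transferForm (hK : IsCompact K) (hS : Continuous S) (hH : Continuous H)
    (hHK : support H ⊆ K) (hf : MemL2c f) (hφ : MemL2c φ) :
    Integrable fun w ↦ H w • (𝓕 f (S w) * 𝓕 φ w) :=
  integrable_smul_of_compact_support hK hH hHK
    ((hf.continuous_fourier.comp hS).mul hφ.continuous_fourier)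

lemma norm_transferForm_le (hSm : AEMeasurable S (volume.restrict K))
    (hmap : (volume.restrict K).map S ≤ c • volume) (hA : ∀ w, |H w| ≤ A)
    (hHK : support H ⊆ K) (hf : MemL2c f) (hφ : MemL2c φ) (hH : Continuous H) :
    ‖transferForm S H f φ‖ ≤ √c * A * lpNorm f 2 volume * lpNorm φ 2 volume := by
  have hA₀ : 0 ≤ A := (abs_nonneg _).trans (hA 0)
  obtain ⟨hfS, hfS'⟩ := memLp_comp_of_map_le hSm hmap hf.memLp_fourier
  have hφK : MemLp (𝓕 φ) 2 (volume.restrict K) := hφ.memLp_fourier.restrict K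
  have hHφ' (w : E) : ‖H w • 𝓕 φ w‖ ≤ A * ‖𝓕 φ w‖ := by
    rw [norm_smul]; gcongr; exact hA w
  have hHφ : MemLp (fun w ↦ H w • 𝓕 φ w) 2 (volume.restrict K) :=
    hφK.of_le_mul (hH.smul hφ.continuous_fourier).aestronglyMeasurable (.of_forall hHφ')
  have hset : transferForm S H f φ = ∫ w in K, (𝓕 f ∘ S) w * H w • 𝓕 φ w := by
    rw [transferForm, ← setIntegral_eq_integral_of_forall_compl_eq_zero (s := K)]
    · simp only [comp_apply, mul_smul_comm]
    · intro w hw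
      rw [notMem_support.1 fun h ↦ hw (hHK h), zero_smul]
  calc ‖transferForm S H f φ‖
      ≤ lpNorm (𝓕 f ∘ S) 2 (volume.restrict K) *
          lpNorm (fun w ↦ H w • 𝓕 φ w) 2 (volume.restrict K) := by
        rw [hset]; exact norm_integral_mul_le_lpNorm_mul_lpNorm hfS hHφ
    _ ≤ (√c * lpNorm f 2 volume) * (A * lpNorm φ 2 volume) := by
        refine mul_le_mul ?_ ?_ lpNorm_nonneg (mul_nonneg (Real.sqrt_nonneg _) lpNorm_nonneg)
        · rwa [← hf.lpNorm_fourier]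
        · refine (lpNorm_le_mul_lpNorm_of_norm_le hA₀ hφK hHφ').trans ?_
          rw [← hφ.lpNorm_fourier, ← toReal_eLpNorm hφK.1, ← toReal_eLpNorm hφ.memLp_fourier.1]
          gcongr
          exacts [hφ.memLp_fourier.2.ne, Measure.restrict_le_self]
    _ = √c * A * lpNorm f 2 volume * lpNorm φ 2 volume := by ring

lemma transferForm_sum_weight {ι : Type*} (s : Finset ι) {H : ι → E → ℝ} (hK : IsCompact K)
    (hS : Continuous S) (hH : ∀ i ∈ s, Continuous (H i)) (hHK : ∀ i ∈ s, support (H i) ⊆ K)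
    (hf : MemL2c f) (hφ : MemL2c φ) :
    transferForm S (∑ i ∈ s, H i) f φ = ∑ i ∈ s, transferForm S (H i) f φ := by
  simp only [transferForm, Finset.sum_apply, Finset.sum_smul]
  exact integral_finsetSum _ fun i hi ↦
    integrable_transferForm hK hS (hH i hi) (hHK i hi) hf hφ

lemma transferForm_sum_sum {ι κ : Type*} (s : Finset ι) (t : Finset κ) {f : ι → F → ℂ}
    {φ : κ → E → ℂ} (hK : IsCompact K) (hS : Continuous S) (hH : Continuous H)
    (hHK : support H ⊆ K) (hf : ∀ i ∈ s, MemL2c (f i)) (hφ : ∀ j ∈ t, MemL2c (φ j)) :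
    transferForm S H (∑ i ∈ s, f i) (∑ j ∈ t, φ j) =
      ∑ i ∈ s, ∑ j ∈ t, transferForm S H (f i) (φ j) := by
  have hint (i : ι) (hi : i ∈ s) (j : κ) (hj : j ∈ t) :
      Integrable fun w ↦ H w • (𝓕 (f i) (S w) * 𝓕 (φ j) w) :=
    integrable_transferForm hK hS hH hHK (hf i hi) (hφ j hj)
  simp only [transferForm, fourier_sum s fun i hi ↦ (hf i hi).integrable,
    fourier_sum t fun j hj ↦ (hφ j hj).integrable, Finset.sum_apply, Finset.sum_mul_sum,
    Finset.smul_sum]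
  rw [integral_finsetSum _ fun i hi ↦ integrable_finsetSum _ (hint i hi)]
  exact Finset.sum_congr rfl fun i hi ↦ integral_finsetSum _ (hint i hi)

/-- The derivative in direction `v` of the phase `⟪p, S w⟫ + ⟪q, w⟫` at `w`. -/
def phaseDeriv (S : E → F) (p : F) (q v w : E) : ℝ := ⟪p, fderiv ℝ S w v⟫ + ⟪q, v⟫

omit [FiniteDimensional ℝ E] [MeasurableSpace E] [BorelSpace E] [FiniteDimensional ℝ F]
  [MeasurableSpace F] [BorelSpace F] in
lemma phaseDeriv_smul (S : E → F) (M : ℝ) (p : F) (q v w : E) :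
    phaseDeriv S (M • p) (M • q) v w = M * phaseDeriv S p q v w := by
  simp only [phaseDeriv, real_inner_smul_left, mul_add]

lemma fourier_recenter_eq_sum {ι : Type*} [Fintype ι] (b : OrthonormalBasis ι ℝ F)
    (hf : MemL2c f) (p v : F) :
    𝓕 (recenter p v f) = ∑ i, ⟪b i, v⟫ • 𝓕 (recenter p (b i) f) := by
  have hconst (i : ι) : ⟪b i, v⟫ • 𝓕 (recenter p (b i) f) =
      𝓕 ((⟪b i, v⟫ : ℂ) • recenter p (b i) f) :=
    (fourier_const_smul (⟪b i, v⟫ : ℂ) _).symm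
  simp only [hconst]
  rw [← fourier_sum _ fun i _ ↦ (hf.recenter p (b i)).integrable.smul _]
  congr 1
  ext ξ
  simp only [recenter, Finset.sum_apply, Pi.smul_apply, smul_smul, Complex.coe_smul,
    ← Finset.sum_smul]
  congr 1
  rw [← b.sum_inner_mul_inner (ξ - p) v]
  exact Finset.sum_congr rfl fun i _ ↦ mul_comm _ _

lemma fderiv_fourier_comp_mul_fourier_apply {ι : Type*} [Fintype ι]
    (b : OrthonormalBasis ι ℝ F) (hf : MemL2c f) (hφ : MemL2c φ) (p : F) (q v : E) {w : E}
    (hS : DifferentiableAt ℝ S w) :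
    fderiv ℝ (fun w ↦ 𝓕 f (S w) * 𝓕 φ w) w v = -(2 * π * Complex.I) *
      (phaseDeriv S p q v w • (𝓕 f (S w) * 𝓕 φ w) +
        ∑ i, ⟪b i, fderiv ℝ S w v⟫ • (𝓕 (recenter p (b i) f) (S w) * 𝓕 φ w) +
        𝓕 f (S w) * 𝓕 (recenter q v φ) w) := by
  have hfS : DifferentiableAt ℝ (fun w ↦ 𝓕 f (S w)) w := (hf.differentiable_fourier _).comp w hS
  have hchain : fderiv ℝ (fun w ↦ 𝓕 f (S w)) w v = fderiv ℝ (𝓕 f) (S w) (fderiv ℝ S w v) := by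
    rw [fderiv_fun_comp w (hf.differentiable_fourier _) hS]; rfl
  have hsum : ∑ i, ⟪b i, fderiv ℝ S w v⟫ • (𝓕 (recenter p (b i) f) (S w) * 𝓕 φ w) =
      𝓕 (recenter p (fderiv ℝ S w v) f) (S w) * 𝓕 φ w := by
    simp only [fourier_recenter_eq_sum b hf p (fderiv ℝ S w v), Finset.sum_apply, Pi.smul_apply,
      Finset.sum_mul, smul_mul_assoc]
  rw [fderiv_fun_mul hfS (hφ.differentiable_fourier _), hsum, phaseDeriv]
  change 𝓕 f (S w) * fderiv ℝ (𝓕 φ) w v + 𝓕 φ w * fderiv ℝ (fun w ↦ 𝓕 f (S w)) w v = _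
  rw [hchain, hf.fderiv_fourier_apply p, hφ.fderiv_fourier_apply q, Complex.real_smul,
    Complex.real_smul, Complex.real_smul]
  push_cast
  ring

end TransferForm

section CkBound

variable {E F : Type*} [NormedAddCommGroup E] [NormedSpace ℝ E] [NormedAddCommGroup F]
  [NormedSpace ℝ F] {K : Set E} {k : ℕ} {A B : ℝ} {H : E → F}

/-- `H` is of class `C^k` on the whole space, and its derivatives of order at most `k` are bounded
by `A` on the set `K`. -/
structure CkBoundOn (K : Set E) (k : ℕ) (A : ℝ) (H : E → F) : Prop where
  contDiff : ContDiff ℝ k H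
  nonneg : 0 ≤ A
  norm_iteratedFDeriv_le : ∀ i ≤ k, ∀ x ∈ K, ‖iteratedFDeriv ℝ i H x‖ ≤ A

namespace CkBoundOn

lemma of_le {l : ℕ} (h : CkBoundOn K k A H) (hl : l ≤ k) : CkBoundOn K l A H :=
  ⟨h.contDiff.of_le (mod_cast hl), h.nonneg, fun i hi ↦ h.norm_iteratedFDeriv_le i (hi.trans hl)⟩

lemma norm_le (h : CkBoundOn K k A H) {x : E} (hx : x ∈ K) : ‖H x‖ ≤ A := by
  simpa using h.norm_iteratedFDeriv_le 0 k.zero_le x hx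

lemma mul {H G : E → ℝ} (hH : CkBoundOn K k A H) (hG : CkBoundOn K k B G) :
    CkBoundOn K k (2 ^ k * A * B) fun x ↦ H x * G x := by
  have hA := hH.nonneg
  have hB := hG.nonneg
  refine ⟨hH.contDiff.mul hG.contDiff, by positivity, fun i hi x hx ↦ ?_⟩
  calc ‖iteratedFDeriv ℝ i (fun x ↦ H x * G x) x‖
      ≤ ∑ j ∈ Finset.range (i + 1), (i.choose j : ℝ) * ‖iteratedFDeriv ℝ j H x‖ *
          ‖iteratedFDeriv ℝ (i - j) G x‖ :=
        norm_iteratedFDeriv_mul_le hH.contDiff hG.contDiff x (mod_cast hi)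
    _ ≤ ∑ j ∈ Finset.range (i + 1), (i.choose j : ℝ) * A * B := by
        gcongr with j hj
        · exact hH.norm_iteratedFDeriv_le j (by grind) x hx
        · exact hG.norm_iteratedFDeriv_le (i - j) (by grind) x hx
    _ = 2 ^ i * A * B := by
        simp only [← Finset.sum_mul]
        rw_mod_cast [Nat.sum_range_choose]
    _ ≤ 2 ^ k * A * B := by gcongr; norm_num

lemma fderiv_apply (hH : CkBoundOn K (k + 1) A H) (v : E) :
    CkBoundOn K k (‖v‖ * A) fun x ↦ fderiv ℝ H x v := by
  have hA := hH.nonneg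
  have hH' : ContDiff ℝ k (fderiv ℝ H) := hH.contDiff.fderiv_right (by norm_cast)
  refine ⟨hH'.clm_apply contDiff_const, by positivity, fun i hi x hx ↦ ?_⟩
  calc ‖iteratedFDeriv ℝ i (fun x ↦ fderiv ℝ H x v) x‖
      ≤ ‖v‖ * ‖iteratedFDeriv ℝ i (fderiv ℝ H) x‖ :=
        norm_iteratedFDeriv_clm_apply_const hH'.contDiffAt (mod_cast hi)
    _ ≤ ‖v‖ * A := by
        rw [norm_iteratedFDeriv_fderiv]
        gcongr
        exact hH.norm_iteratedFDeriv_le (i + 1) (by lia) x hx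

end CkBoundOn

lemma exists_forall_ckBoundOn {ι : Type*} [Finite ι] {H : ι → E → F} (hK : IsCompact K)
    (hH : ∀ i, ContDiff ℝ k (H i)) : ∃ A, 0 ≤ A ∧ ∀ i, CkBoundOn K k A (H i) := by
  have := Fintype.ofFinite ι
  have hbdd (p : ι × Fin (k + 1)) : ∃ A, ∀ x ∈ K, ‖iteratedFDeriv ℝ p.2 (H p.1) x‖ ≤ A :=
    hK.exists_bound_of_continuousOn
      ((hH p.1).continuous_iteratedFDeriv (mod_cast Fin.is_le p.2)).continuousOn
  choose A hA using hbdd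
  refine ⟨∑ p, |A p|, by positivity, fun i ↦ ⟨hH i, by positivity, fun j hj x hx ↦ ?_⟩⟩
  calc ‖iteratedFDeriv ℝ j (H i) x‖ ≤ A (i, ⟨j, by lia⟩) := hA (i, ⟨j, by lia⟩) x hx
    _ ≤ |A (i, ⟨j, by lia⟩)| := le_abs_self _
    _ ≤ ∑ p, |A p| := Finset.single_le_sum (f := fun p ↦ |A p|) (fun _ _ ↦ abs_nonneg _)
        (Finset.mem_univ _)

end CkBound

section IntegrationByParts

variable {E F : Type*} [NormedAddCommGroup E] [InnerProductSpace ℝ E] [FiniteDimensional ℝ E]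
  [MeasurableSpace E] [BorelSpace E] [NormedAddCommGroup F] [InnerProductSpace ℝ F]
  [FiniteDimensional ℝ F] [MeasurableSpace F] [BorelSpace F]
  {S : E → F} {H : E → ℝ} {f : F → ℂ} {φ : E → ℂ} {K : Set E}

omit [FiniteDimensional ℝ E] [MeasurableSpace E] [BorelSpace E] in
lemma support_fderiv_apply_subset (hK : IsClosed K) (hHK : support H ⊆ K) (v : E) :
    support (fun w ↦ fderiv ℝ H w v) ⊆ K := fun w hw ↦
  closure_minimal hHK hK <| support_fderiv_subset ℝ fun h ↦ hw (by simp [h])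

lemma integral_smul_fderiv_fourier_comp_mul_fourier (hK : IsCompact K) (hS : ContDiff ℝ 1 S)
    (hH : ContDiff ℝ 1 H) (hHK : support H ⊆ K) (hf : MemL2c f) (hφ : MemL2c φ) (v : E)
    (hint : Integrable fun w ↦ H w • fderiv ℝ (fun w ↦ 𝓕 f (S w) * 𝓕 φ w) w v) :
    ∫ w, H w • fderiv ℝ (fun w ↦ 𝓕 f (S w) * 𝓕 φ w) w v =
      -transferForm S (fun w ↦ fderiv ℝ H w v) f φ := by
  refine integral_smul_fderiv_eq_neg_fderiv_smul_of_integrable ?_ hint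
    (integrable_transferForm hK hS.continuous hH.continuous hHK hf hφ)
    (fun w _ ↦ hH.differentiable one_ne_zero w) fun w _ ↦
      ((hf.differentiable_fourier _).comp w (hS.differentiable one_ne_zero w)).mul
        (hφ.differentiable_fourier w)
  exact integrable_transferForm hK hS.continuous
    ((hH.continuous_fderiv one_ne_zero).clm_apply continuous_const)
    (support_fderiv_apply_subset hK.isClosed hHK v) hf hφ

/-- Integration by parts, with the derivatives of `𝓕 f` and `𝓕 φ` expanded around the frequencies
`p` and `q`. -/
lemma transferForm_mul_phaseDeriv {ι : Type*} [Fintype ι] (b : OrthonormalBasis ι ℝ F)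
    (hK : IsCompact K) (hS : ContDiff ℝ 1 S) (hH : ContDiff ℝ 1 H) (hHK : support H ⊆ K)
    (hf : MemL2c f) (hφ : MemL2c φ) (p : F) (q v : E) :
    transferForm S (fun w ↦ H w * phaseDeriv S p q v w) f φ =
      (2 * π * Complex.I)⁻¹ * transferForm S (fun w ↦ fderiv ℝ H w v) f φ -
        ∑ i, transferForm S (fun w ↦ H w * ⟪b i, fderiv ℝ S w v⟫) (recenter p (b i) f) φ -
        transferForm S H f (recenter q v φ) := by
  have hSv : Continuous fun w ↦ fderiv ℝ S w v :=
    (hS.continuous_fderiv one_ne_zero).clm_apply continuous_const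
  have hsub (g : E → ℝ) : support (fun w ↦ H w * g w) ⊆ K :=
    (support_mul_subset_left H g).trans hHK
  have hint₁ : Integrable fun w ↦ (H w * phaseDeriv S p q v w) • (𝓕 f (S w) * 𝓕 φ w) :=
    integrable_transferForm hK hS.continuous
      (hH.continuous.mul ((continuous_const.inner hSv).add continuous_const)) (hsub _) hf hφ
  have hint₂ (i : ι) : Integrable fun w ↦ (H w * ⟪b i, fderiv ℝ S w v⟫) •
      (𝓕 (recenter p (b i) f) (S w) * 𝓕 φ w) :=
    integrable_transferForm hK hS.continuous (hH.continuous.mul (continuous_const.inner hSv))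
      (hsub _) (hf.recenter p (b i)) hφ
  have hint₃ : Integrable fun w ↦ H w • (𝓕 f (S w) * 𝓕 (recenter q v φ) w) :=
    integrable_transferForm hK hS.continuous hH.continuous hHK hf (hφ.recenter q v)
  have hexpand : (fun w ↦ H w • fderiv ℝ (fun w ↦ 𝓕 f (S w) * 𝓕 φ w) w v) = fun w ↦
      -(2 * π * Complex.I) * ((H w * phaseDeriv S p q v w) • (𝓕 f (S w) * 𝓕 φ w) +
        ∑ i, (H w * ⟪b i, fderiv ℝ S w v⟫) • (𝓕 (recenter p (b i) f) (S w) * 𝓕 φ w) +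
        H w • (𝓕 f (S w) * 𝓕 (recenter q v φ) w)) := by
    ext w
    rw [fderiv_fourier_comp_mul_fourier_apply b hf hφ p q v (hS.differentiable one_ne_zero w),
      ← mul_smul_comm]
    simp only [mul_smul, smul_add, Finset.smul_sum]
  have hint₁₂ := hint₁.fun_add (integrable_finsetSum Finset.univ fun i _ ↦ hint₂ i)
  have hparts := integral_smul_fderiv_fourier_comp_mul_fourier hK hS hH hHK hf hφ v
    (hexpand ▸ (hint₁₂.fun_add hint₃).const_mul _)
  rw [hexpand, integral_const_mul, integral_add hint₁₂ hint₃,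
    integral_add hint₁ (integrable_finsetSum _ fun i _ ↦ hint₂ i),
    integral_finsetSum _ fun i _ ↦ hint₂ i] at hparts
  rw [sub_sub, eq_sub_iff_add_eq, eq_inv_mul_iff_mul_eq₀ Complex.two_pi_I_ne_zero, ← neg_inj,
    ← hparts, ← add_assoc]
  simp only [transferForm]
  ring

lemma mul_norm_transferForm_mul_phaseDeriv_le {ι : Type*} [Fintype ι]
    (b : OrthonormalBasis ι ℝ F) {M : ℝ} (hM : 0 ≤ M) (hK : IsCompact K) (hS : ContDiff ℝ 1 S)
    (hH : ContDiff ℝ 1 H) (hHK : support H ⊆ K) (hf : MemL2c f) (hφ : MemL2c φ) (p : F)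
    (q v : E) :
    M * ‖transferForm S (fun w ↦ H w * phaseDeriv S p q v w) f φ‖ ≤
      ‖transferForm S (fun w ↦ fderiv ℝ H w v) f φ‖ +
        ∑ i, ‖transferForm S (fun w ↦ H w * ⟪b i, fderiv ℝ S w v⟫)
          (recenter (M • p) (b i) f) φ‖ +
        ‖transferForm S H f (recenter (M • q) v φ)‖ := by
  have hscale : M * transferForm S (fun w ↦ H w * phaseDeriv S p q v w) f φ =
      transferForm S (fun w ↦ H w * phaseDeriv S (M • p) (M • q) v w) f φ := by
    simp only [transferForm, phaseDeriv_smul, ← integral_const_mul, Complex.real_smul]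
    congr! 2
    push_cast
    ring
  have hcoef : ‖(2 * π * Complex.I)⁻¹‖ ≤ 1 := by
    simp only [norm_inv, norm_mul, Complex.norm_ofNat, Complex.norm_real, Complex.norm_I,
      Real.norm_of_nonneg pi_pos.le, mul_one]
    exact inv_le_one_of_one_le₀ (by linarith [pi_gt_three])
  rw [← Real.norm_of_nonneg hM, ← Complex.norm_real, ← norm_mul, Complex.norm_real,
    Real.norm_of_nonneg hM, hscale, transferForm_mul_phaseDeriv b hK hS hH hHK hf hφ]
  refine (norm_sub_le _ _).trans (add_le_add_left ((norm_sub_le _ _).trans ?_) _)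
  refine add_le_add ?_ (norm_sum_le _ _)
  rw [norm_mul]
  exact mul_le_of_le_one_left (norm_nonneg _) hcoef

end IntegrationByParts

section Extension

variable {E F : Type*} [NormedAddCommGroup E] [NormedSpace ℝ E] [FiniteDimensional ℝ E]
  [NormedAddCommGroup F] [NormedSpace ℝ F] {K U : Set E} {k : ℕ}

lemma exists_contDiff_eventuallyEq_nhdsSet {g : E → F} (hK : IsCompact K) (hU : IsOpen U)
    (hKU : K ⊆ U) (hg : ContDiffOn ℝ k g U) :
    ∃ g' : E → F, ContDiff ℝ k g' ∧ g' =ᶠ[𝓝ˢ K] g := by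
  obtain ⟨L, hL, hKL, hLU⟩ := exists_compact_between hK hU hKU
  obtain ⟨ρ, hρK, hρL, -⟩ := exists_contMDiffMap_one_nhds_of_subset_interior (n := ⊤)
    (modelWithCornersSelf ℝ E) hK.isClosed hKL
  have hρ : ContDiff ℝ k ρ := ρ.contMDiff.contDiff.of_le (mod_cast le_top)
  refine ⟨fun x ↦ ρ x • g x, contDiff_iff_contDiffAt.2 fun x ↦ ?_, ?_⟩
  · by_cases hx : x ∈ U
    · exact hρ.contDiffAt.smul (hg.contDiffAt (hU.mem_nhds hx))
    · refine (contDiffAt_const (c := (0 : F))).congr_of_eventuallyEq ?_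
      filter_upwards [hL.isClosed.isOpen_compl.mem_nhds fun hxL ↦ hx (hLU hxL)] with y hy
      rw [hρL y hy, zero_smul]
  · filter_upwards [hρK] with x hx
    rw [hx, one_smul]

lemma exists_contDiff_sum_mul_eq_one {ι : Type*} [Fintype ι] {X : ι → E → ℝ} (hK : IsCompact K)
    (hX : ∀ i, ContDiff ℝ k (X i)) (hne : ∀ w ∈ K, ∃ i, X i w ≠ 0) :
    ∃ G : ι → E → ℝ, (∀ i, ContDiff ℝ k (G i)) ∧ ∀ w ∈ K, ∑ i, G i w * X i w = 1 := by
  set s : E → ℝ := fun w ↦ ∑ i, X i w ^ 2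
  have hs : ContDiff ℝ k s := .sum fun i _ ↦ (hX i).pow 2
  have hsK : ∀ w ∈ K, s w ≠ 0 := fun w hw ↦ by
    obtain ⟨i, hi⟩ := hne w hw
    exact (Finset.sum_pos' (fun _ _ ↦ sq_nonneg _) ⟨i, Finset.mem_univ i, by positivity⟩).ne'
  obtain ⟨g, hg, hgs⟩ := exists_contDiff_eventuallyEq_nhdsSet (g := fun w ↦ (s w)⁻¹) hK
    (isOpen_ne_fun hs.continuous continuous_const) hsK
    (hs.contDiffOn.inv fun w hw ↦ hw)
  refine ⟨fun i w ↦ g w * X i w, fun i ↦ hg.mul (hX i), fun w hw ↦ ?_⟩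
  calc ∑ i, g w * X i w * X i w = g w * s w := by
        simp only [s, Finset.mul_sum, mul_assoc, sq]
    _ = 1 := by rw [hgs.self_of_nhdsSet hw, inv_mul_cancel₀ (hsK w hw)]

end Extension

lemma of_isClosed_of_forall_add_half {P : ℝ → Prop} {c D₀ : ℝ} (hP : IsClosed {D | P D})
    (hD₀ : P D₀) (hstep : ∀ D, P D → P (c + D / 2)) : P (2 * c) := by
  have hiter (n : ℕ) : P (2 * c + (D₀ - 2 * c) * (1 / 2) ^ n) := by
    induction n with
    | zero => simpa using hD₀
    | succ n ih => convert hstep _ ih using 1; ring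
  have hlim : Tendsto (fun n : ℕ ↦ 2 * c + (D₀ - 2 * c) * (1 / 2 : ℝ) ^ n) atTop (𝓝 (2 * c)) := by
    simpa using ((tendsto_pow_atTop_nhds_zero_of_lt_one (r := (1 / 2 : ℝ)) (by norm_num)
      (by norm_num)).const_mul (D₀ - 2 * c)).const_add (2 * c)
  exact hP.mem_of_tendsto hlim (.of_forall hiter)

section Decay

variable {E F : Type*} [NormedAddCommGroup E] [InnerProductSpace ℝ E] [FiniteDimensional ℝ E]
  [MeasurableSpace E] [BorelSpace E] [NormedAddCommGroup F] [InnerProductSpace ℝ F]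
  [FiniteDimensional ℝ F] [MeasurableSpace F] [BorelSpace F]
  {S : E → F} {H : E → ℝ} {f : F → ℂ} {φ : E → ℂ} {K : Set E} {k : ℕ} {p : F} {q : E}
  {A D ε M : ℝ}

/-- Decay of order `k` of the transfer form in the scale `M`, for amplitudes concentrated in balls
of radius `ε M` around the frequencies `M p` and `M q`, uniformly over weights supported in `K`. -/
structure DecayBound (S : E → F) (K : Set E) (p : F) (q : E) (k : ℕ) (ε D M : ℝ) : Prop where
  nonneg : 0 ≤ D
  norm_mul_pow_le : ∀ ⦃A : ℝ⦄ ⦃H : E → ℝ⦄, CkBoundOn K k A H → support H ⊆ K →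
    ∀ ⦃f : F → ℂ⦄ ⦃φ : E → ℂ⦄, MemL2c f → MemL2c φ →
      support f ⊆ Metric.closedBall (M • p) (ε * M) →
      support φ ⊆ Metric.closedBall (M • q) (ε * M) →
      ‖transferForm S H f φ‖ * M ^ k ≤ D * A * lpNorm f 2 volume * lpNorm φ 2 volume

namespace DecayBound

lemma anti {ε' : ℝ} (h : DecayBound S K p q k ε D M) (hM : 0 ≤ M) (hε : ε' ≤ ε) :
    DecayBound S K p q k ε' D M :=
  ⟨h.nonneg, fun _ _ hH hHK _ _ hf hφ hfp hφq ↦ h.norm_mul_pow_le hH hHK hf hφ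
    (hfp.trans <| Metric.closedBall_subset_closedBall <| by gcongr)
    (hφq.trans <| Metric.closedBall_subset_closedBall <| by gcongr)⟩

lemma mono {D' : ℝ} (h : DecayBound S K p q k ε D M) (hD : D ≤ D') :
    DecayBound S K p q k ε D' M := by
  refine ⟨h.nonneg.trans hD, fun A H hH hHK f φ hf hφ hfp hφq ↦
    (h.norm_mul_pow_le hH hHK hf hφ hfp hφq).trans ?_⟩
  have := hH.nonneg
  gcongr
  exacts [lpNorm_nonneg, lpNorm_nonneg]

lemma succ (h : DecayBound S K p q k ε D M) (hM : 0 ≤ M) :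
    DecayBound S K p q (k + 1) ε (D * M) M := by
  refine ⟨mul_nonneg h.nonneg hM, fun A H hH hHK f φ hf hφ hfp hφq ↦ ?_⟩
  calc ‖transferForm S H f φ‖ * M ^ (k + 1) = ‖transferForm S H f φ‖ * M ^ k * M := by ring
    _ ≤ D * A * lpNorm f 2 volume * lpNorm φ 2 volume * M := by
        exact mul_le_mul_of_nonneg_right
          (h.norm_mul_pow_le (hH.of_le k.le_succ) hHK hf hφ hfp hφq) hM
    _ = D * M * A * lpNorm f 2 volume * lpNorm φ 2 volume := by ring

lemma isClosed_setOf : IsClosed {D | DecayBound S K p q k ε D M} := by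
  refine isClosed_of_closure_subset fun D hD ↦ ⟨?_, fun A H hH hHK f φ hf hφ hfp hφq ↦ ?_⟩
  · exact closure_minimal (fun D hD ↦ hD.nonneg) isClosed_Ici hD
  · refine closure_minimal (t := {D | ‖transferForm S H f φ‖ * M ^ k ≤
        D * A * lpNorm f 2 volume * lpNorm φ 2 volume})
      (fun D hD ↦ hD.norm_mul_pow_le hH hHK hf hφ hfp hφq) ?_ hD
    exact isClosed_le continuous_const (by fun_prop)

lemma norm_recenter_left_le {v : F} (h : DecayBound S K p q (k + 1) ε D M) (hε : 0 ≤ ε)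
    (hM : 0 < M) (hv : ‖v‖ = 1) (hH : CkBoundOn K (k + 1) A H) (hHK : support H ⊆ K)
    (hf : MemL2c f) (hφ : MemL2c φ) (hfp : support f ⊆ Metric.closedBall (M • p) (ε * M))
    (hφq : support φ ⊆ Metric.closedBall (M • q) (ε * M)) :
    ‖transferForm S H (recenter (M • p) v f) φ‖ * M ^ k ≤
      D * ε * A * lpNorm f 2 volume * lpNorm φ 2 volume := by
  have hD := h.nonneg
  have hA := hH.nonneg
  refine le_of_mul_le_mul_right ?_ hM
  calc ‖transferForm S H (recenter (M • p) v f) φ‖ * M ^ k * M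
      = ‖transferForm S H (recenter (M • p) v f) φ‖ * M ^ (k + 1) := by ring
    _ ≤ D * A * lpNorm (recenter (M • p) v f) 2 volume * lpNorm φ 2 volume :=
        h.norm_mul_pow_le hH hHK (hf.recenter _ _) hφ
          ((support_recenter_subset _ _ _).trans hfp) hφq
    _ ≤ D * A * (ε * M * ‖v‖ * lpNorm f 2 volume) * lpNorm φ 2 volume := by
        gcongr
        exacts [lpNorm_nonneg, lpNorm_recenter_le hf (by positivity) hfp]
    _ = D * ε * A * lpNorm f 2 volume * lpNorm φ 2 volume * M := by rw [hv]; ring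

lemma norm_recenter_right_le {v : E} (h : DecayBound S K p q (k + 1) ε D M) (hε : 0 ≤ ε)
    (hM : 0 < M) (hv : ‖v‖ = 1) (hH : CkBoundOn K (k + 1) A H) (hHK : support H ⊆ K)
    (hf : MemL2c f) (hφ : MemL2c φ) (hfp : support f ⊆ Metric.closedBall (M • p) (ε * M))
    (hφq : support φ ⊆ Metric.closedBall (M • q) (ε * M)) :
    ‖transferForm S H f (recenter (M • q) v φ)‖ * M ^ k ≤
      D * ε * A * lpNorm f 2 volume * lpNorm φ 2 volume := by
  have hD := h.nonneg
  have hA := hH.nonneg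
  refine le_of_mul_le_mul_right ?_ hM
  calc ‖transferForm S H f (recenter (M • q) v φ)‖ * M ^ k * M
      = ‖transferForm S H f (recenter (M • q) v φ)‖ * M ^ (k + 1) := by ring
    _ ≤ D * A * lpNorm f 2 volume * lpNorm (recenter (M • q) v φ) 2 volume :=
        h.norm_mul_pow_le hH hHK hf (hφ.recenter _ _) hfp
          ((support_recenter_subset _ _ _).trans hφq)
    _ ≤ D * A * lpNorm f 2 volume * (ε * M * ‖v‖ * lpNorm φ 2 volume) := by
        have := lpNorm_nonneg (f := f) (p := 2) (μ := volume)
        gcongr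
        exact lpNorm_recenter_le hφ (by positivity) hφq
    _ = D * ε * A * lpNorm f 2 volume * lpNorm φ 2 volume * M := by rw [hv]; ring

/-- Integrating by parts in one direction gains a factor `M`, at the price of two recentred terms
which are small with `ε`. -/
lemma norm_mul_phaseDeriv_le {ι : Type*} [Fintype ι] (b : OrthonormalBasis ι ℝ F) {B D₀ : ℝ}
    {v : E} (h₀ : DecayBound S K p q k ε D₀ M) (h : DecayBound S K p q (k + 1) ε D M)
    (hK : IsCompact K) (hS : ContDiff ℝ 1 S)
    (hε : 0 ≤ ε) (hM : 0 < M) (hv : ‖v‖ = 1)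
    (hB : ∀ i, CkBoundOn K (k + 1) B fun w ↦ ⟪b i, fderiv ℝ S w v⟫)
    (hH : CkBoundOn K (k + 1) A H) (hHK : support H ⊆ K)
    (hf : MemL2c f) (hφ : MemL2c φ) (hfp : support f ⊆ Metric.closedBall (M • p) (ε * M))
    (hφq : support φ ⊆ Metric.closedBall (M • q) (ε * M)) :
    ‖transferForm S (fun w ↦ H w * phaseDeriv S p q v w) f φ‖ * M ^ (k + 1) ≤
      (D₀ + D * ε * (Fintype.card ι * (2 ^ (k + 1) * B) + 1)) * A * lpNorm f 2 volume *
        lpNorm φ 2 volume := by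
  set T₁ := transferForm S (fun w ↦ fderiv ℝ H w v) f φ
  set T₂ := fun i ↦
    transferForm S (fun w ↦ H w * ⟪b i, fderiv ℝ S w v⟫) (recenter (M • p) (b i) f) φ
  set T₃ := transferForm S H f (recenter (M • q) v φ)
  have hT₁ : ‖T₁‖ * M ^ k ≤ D₀ * A * lpNorm f 2 volume * lpNorm φ 2 volume := by
    simpa only [hv, one_mul] using h₀.norm_mul_pow_le (hH.fderiv_apply v)
      (support_fderiv_apply_subset hK.isClosed hHK v) hf hφ hfp hφq
  have hT₂ (i : ι) : ‖T₂ i‖ * M ^ k ≤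
      D * ε * (2 ^ (k + 1) * A * B) * lpNorm f 2 volume * lpNorm φ 2 volume :=
    h.norm_recenter_left_le hε hM (b.norm_eq_one i) (hH.mul (hB i))
      ((support_mul_subset_left _ _).trans hHK) hf hφ hfp hφq
  have hT₃ : ‖T₃‖ * M ^ k ≤ D * ε * A * lpNorm f 2 volume * lpNorm φ 2 volume :=
    h.norm_recenter_right_le hε hM hv hH hHK hf hφ hfp hφq
  calc ‖transferForm S (fun w ↦ H w * phaseDeriv S p q v w) f φ‖ * M ^ (k + 1)
      = M * ‖transferForm S (fun w ↦ H w * phaseDeriv S p q v w) f φ‖ * M ^ k := by ring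
    _ ≤ (‖T₁‖ + ∑ i, ‖T₂ i‖ + ‖T₃‖) * M ^ k := by
        gcongr
        exact mul_norm_transferForm_mul_phaseDeriv_le b hM.le hK hS (hH.contDiff.of_le (by simp))
          hHK hf hφ p q v
    _ = ‖T₁‖ * M ^ k + ∑ i, ‖T₂ i‖ * M ^ k + ‖T₃‖ * M ^ k := by
        rw [add_mul, add_mul, Finset.sum_mul]
    _ ≤ D₀ * A * lpNorm f 2 volume * lpNorm φ 2 volume +
          ∑ _i : ι, D * ε * (2 ^ (k + 1) * A * B) * lpNorm f 2 volume * lpNorm φ 2 volume +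
          D * ε * A * lpNorm f 2 volume * lpNorm φ 2 volume :=
        add_le_add (add_le_add hT₁ (Finset.sum_le_sum fun i _ ↦ hT₂ i)) hT₃
    _ = _ := by rw [Finset.sum_const, Finset.card_univ, nsmul_eq_mul]; ring

end DecayBound

lemma DecayBound.zero_of_map_le {c : ℝ≥0} (hS : Continuous S)
    (hmap : (volume.restrict K).map S ≤ c • volume) : DecayBound S K p q 0 ε √c M := by
  refine ⟨Real.sqrt_nonneg _, fun A H hH hHK f φ hf hφ _ _ ↦ ?_⟩
  rw [pow_zero, mul_one]
  refine norm_transferForm_le hS.aemeasurable hmap (fun w ↦ ?_) hHK hf hφ hH.contDiff.continuous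
  by_cases hw : w ∈ K
  · exact hH.norm_le hw
  · rw [notMem_support.1 fun h ↦ hw (hHK h), abs_zero]
    exact hH.nonneg

/-- Writing the weight as a combination of derivatives of the phase, integration by parts bounds
the best constant for the order `k + 1` by an affine function of itself whose slope is
proportional to `ε`. -/
lemma DecayBound.integrate_by_parts {ι κ : Type*} [Fintype ι] [Fintype κ]
    (b : OrthonormalBasis ι ℝ F) (e : OrthonormalBasis κ ℝ E) {B Γ D₀ : ℝ} {G : κ → E → ℝ}
    (h₀ : DecayBound S K p q k ε D₀ M) (h : DecayBound S K p q (k + 1) ε D M) (hK : IsCompact K)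
    (hS : ContDiff ℝ 1 S) (hε : 0 ≤ ε) (hM : 0 < M) (hB₀ : 0 ≤ B) (hΓ₀ : 0 ≤ Γ)
    (hB : ∀ j i, CkBoundOn K (k + 1) B fun w ↦ ⟪b i, fderiv ℝ S w (e j)⟫)
    (hΓ : ∀ j, CkBoundOn K (k + 1) Γ (G j))
    (hG : ∀ w ∈ K, ∑ j, G j w * phaseDeriv S p q (e j) w = 1) :
    DecayBound S K p q (k + 1) ε (Fintype.card κ * (2 ^ (k + 1) * Γ) *
      (D₀ + D * ε * (Fintype.card ι * (2 ^ (k + 1) * B) + 1))) M := by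
  have hD₀ := h₀.nonneg
  have hD := h.nonneg
  refine ⟨by positivity, fun A H hH hHK f φ hf hφ hfp hφq ↦ ?_⟩
  set β := D₀ + D * ε * (Fintype.card ι * (2 ^ (k + 1) * B) + 1)
  set W := fun (j : κ) w ↦ H w * G j w * phaseDeriv S p q (e j) w
  have hsub (j : κ) : support (fun w ↦ H w * G j w) ⊆ K := (support_mul_subset_left _ _).trans hHK
  have hsum : H = ∑ j, W j := by
    ext w
    by_cases hw : w ∈ K
    · simp only [W, Finset.sum_apply, mul_assoc, ← Finset.mul_sum, hG w hw, mul_one]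
    · simp [W, notMem_support.1 fun h ↦ hw (hHK h)]
  have hterm (j : κ) : ‖transferForm S (W j) f φ‖ * M ^ (k + 1) ≤
      β * (2 ^ (k + 1) * A * Γ) * lpNorm f 2 volume * lpNorm φ 2 volume :=
    h₀.norm_mul_phaseDeriv_le b h hK hS hε hM (e.norm_eq_one j) (hB j) (hH.mul (hΓ j)) (hsub j)
      hf hφ hfp hφq
  have hphase (j : κ) : Continuous fun w ↦ phaseDeriv S p q (e j) w :=
    (continuous_const.inner ((hS.continuous_fderiv one_ne_zero).clm_apply
      continuous_const)).add continuous_const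
  have hW : transferForm S H f φ = ∑ j, transferForm S (W j) f φ := by
    conv_lhs => rw [hsum]
    exact transferForm_sum_weight _ hK hS.continuous
      (fun j _ ↦ (hH.mul (hΓ j)).contDiff.continuous.mul (hphase j))
      (fun j _ ↦ (support_mul_subset_left _ _).trans (hsub j)) hf hφ
  calc ‖transferForm S H f φ‖ * M ^ (k + 1)
      ≤ ∑ j, ‖transferForm S (W j) f φ‖ * M ^ (k + 1) := by
        rw [hW, ← Finset.sum_mul]; gcongr; exact norm_sum_le _ _
    _ ≤ ∑ _j : κ, β * (2 ^ (k + 1) * A * Γ) * lpNorm f 2 volume * lpNorm φ 2 volume :=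
        Finset.sum_le_sum fun j _ ↦ hterm j
    _ = _ := by rw [Finset.sum_const, Finset.card_univ, nsmul_eq_mul]; ring

omit [FiniteDimensional ℝ E] [MeasurableSpace E] [BorelSpace E] [FiniteDimensional ℝ F]
  [MeasurableSpace F] [BorelSpace F] in
lemma exists_phaseDeriv_basis_ne_zero {κ : Type*} [Fintype κ] (e : OrthonormalBasis κ ℝ E) {w : E}
    (h : ∃ v, phaseDeriv S p q v w ≠ 0) : ∃ j, phaseDeriv S p q (e j) w ≠ 0 := by
  by_contra! hzero
  obtain ⟨v, hv⟩ := h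
  have hlin : innerSL ℝ p ∘L fderiv ℝ S w + innerSL ℝ q = 0 :=
    ContinuousLinearMap.coe_injective <| e.toBasis.ext fun j ↦ by
      simpa [phaseDeriv] using hzero j
  exact hv <| by simpa [phaseDeriv] using congr($hlin v)

lemma exists_decayBound_succ {ε₀ D₀ : ℝ} (hε₀ : 0 < ε₀)
    (h₀ : ∀ M > 0, DecayBound S K p q k ε₀ D₀ M) (hK : IsCompact K)
    (hS : ContDiff ℝ (k + 2 : ℕ) S) (hne : ∀ w ∈ K, ∃ v, phaseDeriv S p q v w ≠ 0) :
    ∃ ε > 0, ∃ D, ∀ M > 0, DecayBound S K p q (k + 1) ε D M := by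
  let b := stdOrthonormalBasis ℝ F
  let e := stdOrthonormalBasis ℝ E
  have hS' (v : E) : ContDiff ℝ (k + 1 : ℕ) fun w ↦ fderiv ℝ S w v :=
    (hS.fderiv_right (by norm_cast)).clm_apply contDiff_const
  obtain ⟨G, hGk, hG⟩ := exists_contDiff_sum_mul_eq_one (k := k + 1) hK
    (fun j ↦ (contDiff_const.inner ℝ (hS' (e j))).add contDiff_const)
    fun w hw ↦ exists_phaseDeriv_basis_ne_zero e (hne w hw)
  obtain ⟨Γ, hΓ₀, hΓ⟩ := exists_forall_ckBoundOn hK hGk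
  obtain ⟨B, hB₀, hB⟩ := exists_forall_ckBoundOn hK
    fun ji : Fin (Module.finrank ℝ E) × Fin (Module.finrank ℝ F) ↦
      (contDiff_const (c := b ji.2)).inner ℝ (hS' (e ji.1))
  set κ := Fintype.card (Fin (Module.finrank ℝ E)) * (2 ^ (k + 1) * Γ)
  set γ := Fintype.card (Fin (Module.finrank ℝ F)) * (2 ^ (k + 1) * B) + 1
  have hκγ : 0 < κ * γ + 1 := by positivity
  set ε := min ε₀ (1 / (2 * (κ * γ + 1)))
  have hε : 0 < ε := by positivity
  have hslope : κ * (ε * γ) ≤ 1 / 2 := calc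
    κ * (ε * γ) = ε * (κ * γ) := by ring
    _ ≤ 1 / (2 * (κ * γ + 1)) * (κ * γ + 1) := by gcongr; exacts [min_le_right _ _, by simp]
    _ = 1 / 2 := by field_simp
  refine ⟨ε, hε, 2 * (κ * D₀), fun M hM ↦ ?_⟩
  have hk := (h₀ M hM).anti hM.le (min_le_left _ _ : ε ≤ ε₀)
  refine of_isClosed_of_forall_add_half DecayBound.isClosed_setOf (hk.succ hM.le) fun D hD ↦ ?_
  have hstep := hk.integrate_by_parts b e hD hK (hS.of_le (by norm_cast; lia)) hε.le hM hB₀ hΓ₀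
    (fun j i ↦ hB (j, i)) hΓ hG
  refine hstep.mono ?_
  calc κ * (D₀ + D * ε * γ) = κ * D₀ + D * (κ * (ε * γ)) := by ring
    _ ≤ κ * D₀ + D * (1 / 2) := by have := hD.nonneg; gcongr
    _ = κ * D₀ + D / 2 := by ring

theorem exists_decayBound {c : ℝ≥0} (hK : IsCompact K) (hS : ContDiff ℝ (k + 1 : ℕ) S)
    (hmap : (volume.restrict K).map S ≤ c • volume)
    (hne : ∀ w ∈ K, ∃ v, phaseDeriv S p q v w ≠ 0) :
    ∃ ε > 0, ∃ D, ∀ M > 0, DecayBound S K p q k ε D M := by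
  induction k with
  | zero => exact ⟨1, one_pos, √c, fun M _ ↦ .zero_of_map_le hS.continuous hmap⟩
  | succ k ih =>
    obtain ⟨ε₀, hε₀, D₀, h₀⟩ := ih (hS.of_le (by norm_cast; lia))
    exact exists_decayBound_succ hε₀ h₀ hK hS hne

end Decay

section FrequencyCells

variable {E : Type*} [NormedAddCommGroup E] [NormedSpace ℝ E] [MeasurableSpace E] [BorelSpace E]
  {f : E → ℂ} {P : Set E} {M δ : ℝ}

lemma exists_simpleFunc_forall_dist_le {X : Type*} [PseudoMetricSpace X]
    [TopologicalSpace.SeparableSpace X] [Nonempty X] [MeasurableSpace X] [OpensMeasurableSpace X]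
    {P : Set X} (hP : IsCompact P) {δ : ℝ} (hδ : 0 < δ) :
    ∃ a : SimpleFunc X X, ∀ x ∈ P, dist (a x) x ≤ δ := by
  let e := TopologicalSpace.denseSeq X
  obtain ⟨t, ht⟩ := hP.elim_finite_subcover (fun n ↦ Metric.ball (e n) δ)
    (fun n ↦ Metric.isOpen_ball) fun x _ ↦ by
      obtain ⟨n, hn⟩ := (TopologicalSpace.denseRange_denseSeq X).exists_dist_lt x hδ
      exact mem_iUnion.2 ⟨n, hn⟩
  refine ⟨SimpleFunc.nearestPt e (t.sup id), fun x hx ↦ ?_⟩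
  obtain ⟨n, hn, hxn⟩ := mem_iUnion₂.1 (ht hx)
  have hle := SimpleFunc.edist_nearestPt_le e x (Finset.le_sup (f := id) hn)
  rw [edist_dist, edist_dist] at hle
  exact ((ENNReal.ofReal_le_ofReal_iff dist_nonneg).1 hle).trans
    ((dist_comm _ _).trans_le hxn.le)

/-- The part of `f` carried by the frequencies `ξ` whose rescaling `M⁻¹ ξ` belongs to the level
set `{a = y}`. -/
def cell (a : SimpleFunc E E) (M : ℝ) (f : E → ℂ) (y : E) : E → ℂ :=
  ((fun ξ ↦ a (M⁻¹ • ξ)) ⁻¹' {y}).indicator f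

omit [BorelSpace E] in
lemma sum_cell (a : SimpleFunc E E) (M : ℝ) (f : E → ℂ) : ∑ y ∈ a.range, cell a M f y = f := by
  classical
  ext ξ
  simp [cell, Set.indicator_apply]

omit [BorelSpace E] in
lemma support_cell (a : SimpleFunc E E) (M : ℝ) (f : E → ℂ) (y : E) :
    support (cell a M f y) = {ξ | a (M⁻¹ • ξ) = y} ∩ support f := support_indicator

omit [BorelSpace E] in
lemma support_cell_subset_closedBall {a : SimpleFunc E E} {y ξ₀ : E} (hM : 0 < M)
    (ha : ∀ x ∈ P, dist (a x) x ≤ δ) (hfP : ∀ ξ ∈ support f, M⁻¹ • ξ ∈ P)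
    (hξ₀ : ξ₀ ∈ support (cell a M f y)) :
    support (cell a M f y) ⊆ Metric.closedBall ξ₀ (2 * δ * M) := by
  intro ξ hξ
  rw [support_cell] at hξ hξ₀
  have hdist : dist (M⁻¹ • ξ) (M⁻¹ • ξ₀) ≤ 2 * δ := by
    have h := ha _ (hfP ξ hξ.2)
    have h₀ := ha _ (hfP ξ₀ hξ₀.2)
    rw [hξ.1] at h
    rw [hξ₀.1] at h₀
    linarith [dist_triangle_left (M⁻¹ • ξ) (M⁻¹ • ξ₀) y]
  rwa [dist_smul₀, norm_inv, Real.norm_of_nonneg hM.le, inv_mul_le_iff₀ hM, mul_comm] at hdist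

end FrequencyCells

section CellAmplitudes

variable {E : Type*} [NormedAddCommGroup E] [InnerProductSpace ℝ E] [MeasurableSpace E]
  [BorelSpace E] [FiniteDimensional ℝ E] {f : E → ℂ}

lemma MemL2c.cell (hf : MemL2c f) (a : SimpleFunc E E) (M : ℝ) (y : E) :
    MemL2c (cell a M f y) :=
  hf.indicator <| measurable_const_smul M⁻¹ (a.measurableSet_fiber y)

lemma lpNorm_cell_le (hf : MemL2c f) (a : SimpleFunc E E) (M : ℝ) (y : E) :
    lpNorm (cell a M f y) 2 volume ≤ lpNorm f 2 volume := by
  simpa using lpNorm_le_mul_lpNorm_of_norm_le zero_le_one hf.memLp fun ξ ↦ by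
    rw [one_mul]; exact norm_indicator_le_norm_self _ _

end CellAmplitudes

section NonstationaryPhase

variable {E F : Type*} [NormedAddCommGroup E] [InnerProductSpace ℝ E] [FiniteDimensional ℝ E]
  [MeasurableSpace E] [BorelSpace E] [NormedAddCommGroup F] [InnerProductSpace ℝ F]
  [FiniteDimensional ℝ F] [MeasurableSpace F] [BorelSpace F]
  {S : E → F} {K : Set E} {k : ℕ} {P : Set (F × E)} {D ε M : ℝ}

lemma closedBall_smul_subset {V : Type*} [NormedAddCommGroup V] [NormedSpace ℝ V] {x x' : V}
    (hM : 0 ≤ M) (hx : dist x' x ≤ ε / 2) :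
    Metric.closedBall (M • x') (ε / 2 * M) ⊆ Metric.closedBall (M • x) (ε * M) := by
  refine Metric.closedBall_subset_closedBall' ?_
  rw [dist_smul₀, Real.norm_of_nonneg hM]
  nlinarith

lemma DecayBound.of_dist_le {p p' : F} {q q' : E} (h : DecayBound S K p q k ε D M) (hM : 0 ≤ M)
    (hp : dist p' p ≤ ε / 2) (hq : dist q' q ≤ ε / 2) :
    DecayBound S K p' q' k (ε / 2) D M := by
  exact ⟨h.nonneg, fun A H hH hHK f φ hf hφ hfp hφq ↦
    h.norm_mul_pow_le hH hHK hf hφ (hfp.trans <| closedBall_smul_subset hM hp)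
      (hφq.trans <| closedBall_smul_subset hM hq)⟩

lemma exists_forall_mem_decayBound {c : ℝ≥0} (hK : IsCompact K) (hS : ContDiff ℝ (k + 1 : ℕ) S)
    (hmap : (volume.restrict K).map S ≤ c • volume) (hP : IsCompact P)
    (hne : ∀ z ∈ P, ∀ w ∈ K, ∃ v, phaseDeriv S z.1 z.2 v w ≠ 0) :
    ∃ ε > 0, ∃ D ≥ 0, ∀ z ∈ P, ∀ M > 0, DecayBound S K z.1 z.2 k ε D M := by
  refine hP.induction_on (p := fun s ↦ ∃ ε > 0, ∃ D ≥ 0, ∀ z ∈ s, ∀ M > 0,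
    DecayBound S K z.1 z.2 k ε D M) ⟨1, one_pos, 0, le_rfl, by simp⟩ ?_ ?_ ?_
  · rintro s t hst ⟨ε, hε, D, hD, h⟩
    exact ⟨ε, hε, D, hD, fun z hz ↦ h z (hst hz)⟩
  · rintro s t ⟨ε, hε, D, hD, hs⟩ ⟨ε', hε', D', -, ht⟩
    refine ⟨min ε ε', lt_min hε hε', max D D', le_max_of_le_left hD, ?_⟩
    rintro z (hz | hz) M hM
    · exact ((hs z hz M hM).anti hM.le (min_le_left _ _)).mono (le_max_left _ _)
    · exact ((ht z hz M hM).anti hM.le (min_le_right _ _)).mono (le_max_right _ _)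
  · intro z hz
    obtain ⟨ε, hε, D, hD⟩ := exists_decayBound hK hS hmap (hne z hz)
    refine ⟨Metric.closedBall z (ε / 2),
      mem_nhdsWithin_of_mem_nhds (Metric.closedBall_mem_nhds z (half_pos hε)),
      ε / 2, half_pos hε, D, (hD 1 one_pos).nonneg, fun z' hz' M hM ↦ ?_⟩
    rw [Metric.mem_closedBall, Prod.dist_eq, max_le_iff] at hz'
    exact (hD M hM).of_dist_le hM.le hz'.1 hz'.2

lemma norm_transferForm_cell_mul_pow_le {f : F → ℂ} {φ : E → ℂ} {H : E → ℝ} {A : ℝ}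
    {a : SimpleFunc F F} {a' : SimpleFunc E E}
    (hD : ∀ z ∈ P, ∀ M > 0, DecayBound S K z.1 z.2 k ε D M) (hD₀ : 0 ≤ D)
    (ha : ∀ x ∈ Prod.fst '' P, dist (a x) x ≤ ε / 2)
    (ha' : ∀ x ∈ Prod.snd '' P, dist (a' x) x ≤ ε / 2)
    (hH : CkBoundOn K k A H) (hHK : support H ⊆ K) (hM : 0 < M) (hf : MemL2c f) (hφ : MemL2c φ)
    (hfφ : ∀ ξ ∈ support f, ∀ ζ ∈ support φ, (M⁻¹ • ξ, M⁻¹ • ζ) ∈ P) (y : F) (y' : E) :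
    ‖transferForm S H (cell a M f y) (cell a' M φ y')‖ * M ^ k ≤
      D * A * lpNorm f 2 volume * lpNorm φ 2 volume := by
  have hA := hH.nonneg
  have hpos : 0 ≤ D * A * lpNorm f 2 volume * lpNorm φ 2 volume :=
    mul_nonneg (mul_nonneg (by positivity) lpNorm_nonneg) lpNorm_nonneg
  rcases (support (cell a M f y)).eq_empty_or_nonempty with hf₀ | ⟨ξ, hξ⟩
  · rw [support_eq_empty_iff.1 hf₀]
    simpa [transferForm, Real.fourier_eq] using hpos
  rcases (support (cell a' M φ y')).eq_empty_or_nonempty with hφ₀ | ⟨ζ, hζ⟩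
  · rw [support_eq_empty_iff.1 hφ₀]
    simpa [transferForm, Real.fourier_eq] using hpos
  have hξf : ξ ∈ support f := (support_cell a M f y ▸ hξ).2
  have hζφ : ζ ∈ support φ := (support_cell a' M φ y' ▸ hζ).2
  have hcenter := (hD _ (hfφ ξ hξf ζ hζφ) M hM).norm_mul_pow_le hH hHK (hf.cell a M y)
    (hφ.cell a' M y')
  simp only [smul_inv_smul₀ hM.ne'] at hcenter
  have hball := support_cell_subset_closedBall hM ha (fun x hx ↦ ⟨_, hfφ x hx ζ hζφ, rfl⟩) hξ
  have hball' := support_cell_subset_closedBall hM ha' (fun x hx ↦ ⟨_, hfφ ξ hξf x hx, rfl⟩) hζ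
  rw [mul_div_cancel₀ ε two_ne_zero] at hball hball'
  refine (hcenter hball hball').trans ?_
  gcongr
  exacts [lpNorm_nonneg, mul_nonneg (by positivity) lpNorm_nonneg, lpNorm_cell_le hf a M y,
    lpNorm_cell_le hφ a' M y']

theorem exists_norm_transferForm_mul_pow_le_of_contDiff {c : ℝ≥0} {H : E → ℝ} (hK : IsCompact K)
    (hS : ContDiff ℝ (k + 1 : ℕ) S) (hmap : (volume.restrict K).map S ≤ c • volume)
    (hP : IsCompact P) (hne : ∀ z ∈ P, ∀ w ∈ K, ∃ v, phaseDeriv S z.1 z.2 v w ≠ 0)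
    (hH : ContDiff ℝ k H) (hHK : support H ⊆ K) :
    ∃ C ≥ 0, ∀ M > 0, ∀ f φ, MemL2c f → MemL2c φ →
      (∀ ξ ∈ support f, ∀ ζ ∈ support φ, (M⁻¹ • ξ, M⁻¹ • ζ) ∈ P) →
      ‖transferForm S H f φ‖ * M ^ k ≤ C * lpNorm f 2 volume * lpNorm φ 2 volume := by
  obtain ⟨ε, hε, D, hD₀, hD⟩ := exists_forall_mem_decayBound hK hS hmap hP hne
  obtain ⟨A, hA₀, hA⟩ := exists_forall_ckBoundOn hK fun _ : Unit ↦ hH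
  obtain ⟨a, ha⟩ := exists_simpleFunc_forall_dist_le (hP.image continuous_fst) (half_pos hε)
  obtain ⟨a', ha'⟩ := exists_simpleFunc_forall_dist_le (hP.image continuous_snd) (half_pos hε)
  refine ⟨#a.range * #a'.range * (D * A), by positivity, fun M hM f φ hf hφ hfφ ↦ ?_⟩
  have hsum : transferForm S H f φ =
      ∑ y ∈ a.range, ∑ y' ∈ a'.range, transferForm S H (cell a M f y) (cell a' M φ y') := by
    conv_lhs => rw [← sum_cell a M f, ← sum_cell a' M φ]
    exact transferForm_sum_sum _ _ hK hS.continuous hH.continuous hHK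
      (fun y _ ↦ hf.cell a M y) fun y' _ ↦ hφ.cell a' M y'
  calc ‖transferForm S H f φ‖ * M ^ k
      ≤ ∑ y ∈ a.range, ∑ y' ∈ a'.range,
          ‖transferForm S H (cell a M f y) (cell a' M φ y')‖ * M ^ k := by
        simp only [hsum, ← Finset.sum_mul]
        gcongr
        exact norm_sum_le_of_le _ fun y _ ↦ norm_sum_le _ _
    _ ≤ ∑ _y ∈ a.range, ∑ _y' ∈ a'.range, D * A * lpNorm f 2 volume * lpNorm φ 2 volume :=
        Finset.sum_le_sum fun y _ ↦ Finset.sum_le_sum fun y' _ ↦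
          norm_transferForm_cell_mul_pow_le hD hD₀ ha ha' (hA ()) hHK hM hf hφ hfφ y y'
    _ = #a.range * #a'.range * (D * A) * lpNorm f 2 volume * lpNorm φ 2 volume := by
        simp only [Finset.sum_const, nsmul_eq_mul]; ring

end NonstationaryPhase

section LocalDiffeomorphism

variable {E : Type*} [NormedAddCommGroup E] [InnerProductSpace ℝ E] [FiniteDimensional ℝ E]
  [MeasurableSpace E] [BorelSpace E] {S S' : E → E} {K U : Set E} {k : ℕ} {P : Set (E × E)}
  {H : E → ℝ}

lemma exists_map_restrict_le_smul_of_contDiffOn (hK : IsCompact K) (hU : IsOpen U) (hKU : K ⊆ U)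
    (hS : ContDiffOn ℝ 1 S U) (hinj : InjOn S K) (hdet : ∀ w ∈ K, (fderiv ℝ S w).det ≠ 0) :
    ∃ c : ℝ≥0, (volume.restrict K).map S ≤ c • (volume : Measure E) :=
  exists_map_restrict_le_smul volume hK
    (fun _ hw ↦ (hS.contDiffAt (hU.mem_nhds (hKU hw))).differentiableAt one_ne_zero)
    ((hS.continuousOn_fderiv_of_isOpen hU le_rfl).mono hKU) hinj hdet

theorem exists_norm_transferForm_le (hK : IsCompact K) (hU : IsOpen U) (hKU : K ⊆ U)
    (hS : ContDiffOn ℝ 1 S U) (hinj : InjOn S K) (hdet : ∀ w ∈ K, (fderiv ℝ S w).det ≠ 0)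
    (hH : Continuous H) (hHK : support H ⊆ K) :
    ∃ C ≥ 0, ∀ f φ, MemL2c f → MemL2c φ →
      ‖transferForm S H f φ‖ ≤ C * lpNorm f 2 volume * lpNorm φ 2 volume := by
  obtain ⟨c, hc⟩ := exists_map_restrict_le_smul_of_contDiffOn hK hU hKU hS hinj hdet
  obtain ⟨A, hA⟩ := hK.exists_bound_of_continuousOn hH.continuousOn
  refine ⟨√c * |A|, by positivity, fun f φ hf hφ ↦
    norm_transferForm_le ((hS.continuousOn.mono hKU).aemeasurable hK.measurableSet) hc
      (fun w ↦ ?_) hHK hf hφ hH⟩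
  by_cases hw : w ∈ K
  · exact (hA w hw).trans (le_abs_self A)
  · rw [notMem_support.1 fun h ↦ hw (hHK h), abs_zero]
    positivity

lemma transferForm_congr (hSS' : EqOn S' S K) (hHK : support H ⊆ K) (f φ : E → ℂ) :
    transferForm S' H f φ = transferForm S H f φ := by
  refine integral_congr_ae (.of_forall fun w ↦ ?_)
  by_cases hw : w ∈ support H
  · simp only [hSS' (hHK hw)]
  · simp only [notMem_support.1 hw, zero_smul]

theorem exists_norm_transferForm_mul_pow_le (hK : IsCompact K) (hU : IsOpen U) (hKU : K ⊆ U)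
    (hS : ContDiffOn ℝ (k + 1 : ℕ) S U) (hinj : InjOn S K)
    (hdet : ∀ w ∈ K, (fderiv ℝ S w).det ≠ 0) (hP : IsCompact P)
    (hne : ∀ z ∈ P, ∀ w ∈ K, ∃ v, phaseDeriv S z.1 z.2 v w ≠ 0)
    (hH : ContDiff ℝ k H) (hHK : support H ⊆ K) :
    ∃ C ≥ 0, ∀ M > 0, ∀ f φ, MemL2c f → MemL2c φ →
      (∀ ξ ∈ support f, ∀ ζ ∈ support φ, (M⁻¹ • ξ, M⁻¹ • ζ) ∈ P) →
      ‖transferForm S H f φ‖ * M ^ k ≤ C * lpNorm f 2 volume * lpNorm φ 2 volume := by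
  obtain ⟨S', hS', hSS'⟩ := exists_contDiff_eventuallyEq_nhdsSet hK hU hKU hS
  have heq : EqOn S' S K := hSS'.self_of_nhdsSet
  have hfderiv (w) (hw : w ∈ K) : fderiv ℝ S' w = fderiv ℝ S w :=
    (hSS'.filter_mono (nhds_le_nhdsSet hw)).fderiv_eq
  obtain ⟨c, hc⟩ := exists_map_restrict_le_smul_of_contDiffOn hK isOpen_univ (subset_univ K)
    (hS'.of_le (by norm_cast; lia)).contDiffOn (hinj.congr heq.symm)
    fun w hw ↦ hfderiv w hw ▸ hdet w hw
  simp only [← transferForm_congr heq hHK]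
  refine exists_norm_transferForm_mul_pow_le_of_contDiff hK hS' hc hP (fun z hz w hw ↦ ?_) hH hHK
  simpa only [phaseDeriv, hfderiv w hw] using hne z hz w hw

end LocalDiffeomorphism

section Multipliers

variable {E : Type*} [NormedAddCommGroup E] [InnerProductSpace ℝ E] [FiniteDimensional ℝ E]
  [MeasurableSpace E] [BorelSpace E] {u w ψ ψ' : E → ℂ} {B : ℝ}

/-- A bounded, compactly supported Fourier multiplier, normalized to be bounded by one. -/
structure IsUnitMultiplier (ψ : E → ℂ) : Prop where
  measurable : Measurable ψ
  norm_le_one : ∀ ξ, ‖ψ ξ‖ ≤ 1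
  hasCompactSupport : HasCompactSupport ψ

lemma IsUnitMultiplier.mul (hψ : IsUnitMultiplier ψ) {f : E → ℂ} (hf : MemL2c f) :
    MemL2c fun ξ ↦ ψ ξ * f ξ :=
  ⟨hf.memLp.of_le (hψ.measurable.aestronglyMeasurable.mul hf.memLp.1)
    (.of_forall fun ξ ↦ by
      rw [norm_mul]; exact mul_le_of_le_one_left (norm_nonneg _) (hψ.norm_le_one ξ)),
    hf.hasCompactSupport.mul_left⟩

lemma IsUnitMultiplier.mul_fourier (hψ : IsUnitMultiplier ψ) (hu : Integrable u) :
    MemL2c fun ξ ↦ ψ ξ * 𝓕 u ξ := by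
  have hsupp : HasCompactSupport fun ξ ↦ ψ ξ * 𝓕 u ξ := hψ.hasCompactSupport.mul_right
  refine ⟨hsupp.memLp_of_bound (hψ.measurable.aestronglyMeasurable.mul
    (continuous_fourier_of_integrable hu).aestronglyMeasurable) (∫ x, ‖u x‖)
    (.of_forall fun ξ ↦ ?_), hsupp⟩
  rw [norm_mul, ← one_mul (∫ x, ‖u x‖)]
  gcongr
  exacts [hψ.norm_le_one ξ, VectorFourier.norm_fourierIntegral_le_integral_norm ..]

lemma integral_mul_conj_eq_lpNorm_sq {g : E → ℂ} (hg : MemLp g 2) :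
    ∫ x, g x * (starRingEnd ℂ) (g x) = (lpNorm g 2 volume ^ 2 : ℝ) := by
  have hsq : lpNorm g 2 volume ^ 2 = ∫ x, ‖g x‖ ^ 2 := by
    rw [lpNorm_eq_integral_norm_rpow_toReal two_ne_zero ENNReal.ofNat_ne_top hg.1,
      ENNReal.toReal_ofNat, ← Real.rpow_natCast, ← Real.rpow_mul (by positivity)]
    norm_num
  rw [hsq, ← integral_complex_ofReal]
  simp only [Complex.mul_conj, Complex.normSq_eq_norm_sq]

lemma lpNorm_mul_fourier_le (hw : Integrable w) (hψ : IsUnitMultiplier ψ) (hB₀ : 0 ≤ B)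
    (hB : ∀ φ, MemL2c φ → support φ ⊆ support ψ → ‖∫ x, w x * 𝓕 φ x‖ ≤ B * lpNorm φ 2 volume) :
    lpNorm (fun ξ ↦ ψ ξ * 𝓕 w ξ) 2 volume ≤ B := by
  set g : E → ℂ := fun ξ ↦ ψ ξ * 𝓕 w ξ with hg
  have hgL : MemL2c g := hψ.mul_fourier hw
  have hgL' : MemL2c fun ξ ↦ (starRingEnd ℂ) (g ξ) :=
    ⟨hgL.memLp.star, hgL.hasCompactSupport.comp_left (map_zero _)⟩
  have hφ := hψ.mul hgL'
  -- The test amplitude realizing the duality is `φ = ψ · conj (ψ · 𝓕 w)`.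
  have hint : ∫ x, w x * 𝓕 (fun ξ ↦ ψ ξ * (starRingEnd ℂ) (g ξ)) x =
      (lpNorm g 2 volume ^ 2 : ℝ) := by
    rw [← integral_fourier_mul_eq_flip hw hφ.integrable,
      ← integral_mul_conj_eq_lpNorm_sq hgL.memLp]
    exact integral_congr_ae (.of_forall fun ξ ↦ by simp only [hg]; ring)
  have hsq : lpNorm g 2 volume ^ 2 ≤ B * lpNorm g 2 volume := by
    calc lpNorm g 2 volume ^ 2 = ‖((lpNorm g 2 volume ^ 2 : ℝ) : ℂ)‖ := by
          rw [Complex.norm_real, Real.norm_of_nonneg (by positivity)]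
      _ ≤ B * lpNorm (fun ξ ↦ ψ ξ * (starRingEnd ℂ) (g ξ)) 2 volume :=
          hint ▸ hB _ hφ (support_mul_subset_left ..)
      _ ≤ B * lpNorm g 2 volume := by
          gcongr
          refine (lpNorm_le_mul_lpNorm_of_norm_le zero_le_one hgL.memLp fun ξ ↦ ?_).trans_eq
            (one_mul _)
          rw [norm_mul, RCLike.norm_conj]
          gcongr
          exact hψ.norm_le_one ξ
  rcases (lpNorm_nonneg (f := g) (p := 2) (μ := volume)).eq_or_lt with h₀ | hpos
  · rwa [← h₀]
  · nlinarith

theorem eLpNorm_multiplier_transfer_le {S : E → E} {H : E → ℝ} {K : Set E} (hK : IsCompact K)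
    (hS : ContinuousOn S K) (hH : Continuous H) (hHK : support H ⊆ K) (hu : Integrable u)
    (hψ : IsUnitMultiplier ψ) (hψ' : IsUnitMultiplier ψ') (hB₀ : 0 ≤ B)
    (hB : ∀ f φ, MemL2c f → MemL2c φ → (∀ ξ ∈ support f, -ξ ∈ support ψ) →
      support φ ⊆ support ψ' →
      ‖transferForm S H f φ‖ ≤ B * lpNorm f 2 volume * lpNorm φ 2 volume) :
    eLpNorm (𝓕⁻ fun ζ ↦ ψ' ζ * 𝓕 (fun x ↦ (H x : ℂ) * 𝓕⁻ (fun ξ ↦ ψ ξ * 𝓕 u ξ) (S x)) ζ)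
        2 volume ≤
      ENNReal.ofReal B * eLpNorm (𝓕⁻ fun ξ ↦ ψ ξ * 𝓕 u ξ) 2 volume := by
  set g : E → ℂ := fun ξ ↦ ψ ξ * 𝓕 u ξ
  have hgL : MemL2c g := hψ.mul_fourier hu
  have hinv : 𝓕⁻ g = 𝓕 (g ∘ Neg.neg) := Real.fourierInv_eq_fourier_comp_neg g
  set w : E → ℂ := fun x ↦ (H x : ℂ) * 𝓕⁻ g (S x) with hw
  have hwint : Integrable w := by
    rw [← integrableOn_iff_integrable_of_support_subset (s := K) fun x hx ↦ hHK fun h ↦ hx ?_]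
    · rw [hw, hinv]
      exact ((Complex.continuous_ofReal.comp hH).continuousOn.mul
        (hgL.comp_neg.continuous_fourier.comp_continuousOn hS)).integrableOn_compact hK
    · simp only [hw, h, Complex.ofReal_zero, zero_mul]
  have hwL := hψ'.mul_fourier hwint
  rw [eLpNorm_fourierInv hwL.integrable hwL.memLp, eLpNorm_fourierInv hgL.integrable hgL.memLp,
    ← ofReal_lpNorm hwL.memLp, ← ofReal_lpNorm hgL.memLp, ← ENNReal.ofReal_mul hB₀]
  refine ENNReal.ofReal_le_ofReal <| lpNorm_mul_fourier_le hwint hψ'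
    (mul_nonneg hB₀ lpNorm_nonneg) fun φ hφ hφψ ↦ ?_
  have hform : ∫ x, w x * 𝓕 φ x = transferForm S H (g ∘ Neg.neg) φ := by
    simp only [hw, hinv, transferForm, Complex.real_smul, mul_assoc]
  have hneg : lpNorm (g ∘ Neg.neg) 2 volume = lpNorm g 2 volume := by
    rw [← toReal_eLpNorm hgL.comp_neg.memLp.1, ← toReal_eLpNorm hgL.memLp.1,
      eLpNorm_comp_measurePreserving hgL.memLp.1 (Measure.measurePreserving_neg volume)]
  rw [hform, ← hneg]
  exact hB _ φ hgL.comp_neg hφ (fun ξ hξ ↦ support_mul_subset_left ψ (𝓕 u) hξ) hφψ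

end Multipliers

section LittlewoodPaley

lemma en_eq_norm (v : ℝ × ℝ) : en v = ‖WithLp.toLp 2 v‖ := by
  simp [en, WithLp.prod_norm_eq_of_L2]

lemma en_nonneg (v : ℝ × ℝ) : 0 ≤ en v := Real.sqrt_nonneg _

lemma en_smul (c : ℝ) (v : ℝ × ℝ) : en (c • v) = |c| * en v := by
  rw [en_eq_norm, en_eq_norm, WithLp.toLp_smul, norm_smul, Real.norm_eq_abs]

lemma en_eq_zero {v : ℝ × ℝ} : en v = 0 ↔ v = 0 := by simp [en_eq_norm]

lemma norm_le_en (v : ℝ × ℝ) : ‖v‖ ≤ en v := by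
  rw [Prod.norm_def]
  exact max_le (Real.abs_le_sqrt (le_add_of_nonneg_right (sq_nonneg _)))
    (Real.abs_le_sqrt (le_add_of_nonneg_left (sq_nonneg _)))

lemma continuous_en : Continuous en := by unfold en; fun_prop

variable {χ : ℝ → ℝ} {Θ : Polarization} {n : ℕ} {σ : Bool} {ξ : ℝ × ℝ}

lemma en_le_of_psiLP_ne_zero (hχ : ChiOK χ) (h : psiLP χ Θ n σ ξ ≠ 0) :
    en ξ ≤ (2 : ℝ) ^ ((n : ℤ) + 1) := by
  obtain ⟨-, -, hχ₀, -⟩ := hχ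
  contrapose! h
  have hscale (j : ℤ) (hj : -(n : ℤ) ≤ j) : χ ((2 : ℝ) ^ j * en ξ) = 0 := by
    refine hχ₀ _ ?_
    calc (2 : ℝ) ≤ (2 : ℝ) ^ j * (2 : ℝ) ^ ((n : ℤ) + 1) := by
          rw [← zpow_add₀ two_ne_zero]
          exact (zpow_one (2 : ℝ)).symm.trans_le (zpow_le_zpow_right₀ one_le_two (by lia))
      _ ≤ (2 : ℝ) ^ j * en ξ := by gcongr
  rcases eq_or_ne n 0 with rfl | hn
  · have hzero := hscale 0 (by simp)
    rw [zpow_zero, one_mul] at hzero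
    rw [psiLP, if_pos rfl, hzero, zero_div]
  · rw [psiLP, if_neg hn, hscale _ le_rfl, hscale _ (by lia), sub_self, mul_zero]

lemma le_en_of_psiLP_ne_zero (hχ : ChiOK χ) (hn : n ≠ 0) (h : psiLP χ Θ n σ ξ ≠ 0) :
    (2 : ℝ) ^ ((n : ℤ) - 1) ≤ en ξ := by
  obtain ⟨-, hχ₁, -, -⟩ := hχ
  contrapose! h
  have hscale (j : ℤ) (hj : j ≤ -(n : ℤ) + 1) : χ ((2 : ℝ) ^ j * en ξ) = 1 := by
    refine hχ₁ _ ?_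
    calc (2 : ℝ) ^ j * en ξ ≤ (2 : ℝ) ^ j * (2 : ℝ) ^ ((n : ℤ) - 1) := by gcongr
      _ ≤ 1 := by
        rw [← zpow_add₀ two_ne_zero]
        exact zpow_le_one_of_nonpos₀ one_le_two (by lia)
  rw [psiLP, if_neg hn, hscale _ (by lia), hscale _ le_rfl, sub_self, mul_zero]

lemma ne_zero_of_psiLP_ne_zero (hχ : ChiOK χ) (hn : n ≠ 0) (h : psiLP χ Θ n σ ξ ≠ 0) :
    ξ ≠ 0 := by
  have hpos : (0 : ℝ) < 2 ^ ((n : ℤ) - 1) := by positivity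
  exact fun h₀ ↦ (hpos.trans_le (le_en_of_psiLP_ne_zero hχ hn h)).ne' (en_eq_zero.2 h₀)

lemma notMem_Cm_of_psiLP_ne_zero (hχ : ChiOK χ) (hn : n ≠ 0) (h : psiLP χ Θ n true ξ ≠ 0) :
    ξ ∉ Θ.Cm :=
  fun hm ↦ h <| by simp [psiLP, hn, Θ.zero_on_m ξ hm (ne_zero_of_psiLP_ne_zero hχ hn h)]

lemma notMem_Cp_of_psiLP_ne_zero (hχ : ChiOK χ) (hn : n ≠ 0) (h : psiLP χ Θ n false ξ ≠ 0) :
    ξ ∉ Θ.Cp :=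
  fun hp ↦ h <| by
    simp [psiLP, hn, Θ.phim_def, Θ.one_on_p ξ hp (ne_zero_of_psiLP_ne_zero hχ hn h)]

lemma abs_psiLP_le_one (hχ : ChiOK χ) : |psiLP χ Θ n σ ξ| ≤ 1 := by
  obtain ⟨-, -, -, hχ⟩ := hχ
  have hphi := Θ.mem_Icc_p ξ
  have hangle : |if σ then Θ.phip ξ else Θ.phim ξ| ≤ 1 := by
    rw [abs_le]
    split_ifs <;> constructor <;> linarith [hphi.1, hphi.2, Θ.phim_def ξ]
  have hradial (a b : ℝ) : |χ a - χ b| ≤ 1 := by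
    rw [abs_le]
    constructor <;> linarith [(hχ a).1, (hχ a).2, (hχ b).1, (hχ b).2]
  rcases eq_or_ne n 0 with hn | hn
  · rw [psiLP, if_pos hn, abs_le]
    constructor <;> linarith [(hχ (en ξ)).1, (hχ (en ξ)).2]
  · rw [psiLP, if_neg hn, abs_mul]
    exact mul_le_one₀ hangle (abs_nonneg _) (hradial _ _)

lemma measurable_psiLP (hχ : ChiOK χ) : Measurable (psiLP χ Θ n σ) := by
  have hχ := hχ.1.continuous
  have hen := continuous_en
  have hp : Measurable Θ.phip :=
    measurable_of_continuousOn_compl_singleton 0 Θ.smooth_p.continuousOn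
  have hm : Measurable Θ.phim :=
    measurable_of_continuousOn_compl_singleton 0 Θ.smooth_m.continuousOn
  have hradial : Measurable fun ξ ↦
      χ ((2 : ℝ) ^ (-(n : ℤ)) * en ξ) - χ ((2 : ℝ) ^ (-(n : ℤ) + 1) * en ξ) :=
    Continuous.measurable (by fun_prop)
  unfold psiLP
  split_ifs
  · exact Continuous.measurable (by fun_prop)
  exacts [hp.mul hradial, hm.mul hradial]

end LittlewoodPaley

section EuclideanPlane

/-- The plane with its Euclidean norm; the product norm of `ℝ × ℝ` is the supremum norm. -/
abbrev Plane : Type := WithLp 2 (ℝ × ℝ)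

lemma FT_eq_fourier (u : ℝ × ℝ → ℂ) (ξ : ℝ × ℝ) :
    FT u ξ = 𝓕 (fun x : Plane ↦ u x.ofLp) (WithLp.toLp 2 ξ) := by
  rw [Real.fourier_eq', FT, ← (WithLp.volume_preserving_ofLp ℝ ℝ).integral_comp
    (MeasurableEquiv.toLp 2 (ℝ × ℝ)).symm.measurableEmbedding]
  simp [WithLp.prod_inner_apply, mul_comm]

lemma invFT_eq_fourierInv (u : ℝ × ℝ → ℂ) (x : ℝ × ℝ) :
    invFT u x = 𝓕⁻ (fun ξ : Plane ↦ u ξ.ofLp) (WithLp.toLp 2 x) := by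
  rw [Real.fourierInv_eq', invFT, ← (WithLp.volume_preserving_ofLp ℝ ℝ).integral_comp
    (MeasurableEquiv.toLp 2 (ℝ × ℝ)).symm.measurableEmbedding]
  simp [WithLp.prod_inner_apply]

lemma eLpNorm_comp_ofLp (g : ℝ × ℝ → ℂ) :
    eLpNorm (fun x : Plane ↦ g x.ofLp) 2 volume = eLpNorm g 2 volume := by
  have hvol : Measure.map (MeasurableEquiv.toLp 2 (ℝ × ℝ)).symm volume = volume :=
    (WithLp.volume_preserving_ofLp ℝ ℝ).map_eq
  rw [← hvol, (MeasurableEquiv.toLp 2 (ℝ × ℝ)).symm.measurableEmbedding.eLpNorm_map_measure]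
  rfl

lemma psiD_ofLp (χ : ℝ → ℝ) (Θ : Polarization) (n : ℕ) (σ : Bool) (u : ℝ × ℝ → ℂ) :
    (fun x : Plane ↦ psiD χ Θ n σ u x.ofLp) =
      𝓕⁻ fun ξ : Plane ↦ (psiLP χ Θ n σ ξ.ofLp : ℂ) * 𝓕 (fun x : Plane ↦ u x.ofLp) ξ := by
  ext x
  simp only [psiD, invFT_eq_fourierInv, FT_eq_fourier, WithLp.toLp_ofLp]

lemma isUnitMultiplier_psiLP {χ : ℝ → ℝ} (hχ : ChiOK χ) (Θ : Polarization) (n : ℕ) (σ : Bool) :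
    IsUnitMultiplier fun ξ : Plane ↦ (psiLP χ Θ n σ ξ.ofLp : ℂ) where
  measurable := Complex.measurable_ofReal.comp <| (measurable_psiLP hχ).comp
    (WithLp.volume_preserving_ofLp ℝ ℝ).measurable
  norm_le_one ξ := by
    rw [Complex.norm_real]
    exact abs_psiLP_le_one hχ
  hasCompactSupport := by
    refine .of_support_subset_isCompact
      (isCompact_closedBall (0 : Plane) ((2 : ℝ) ^ ((n : ℤ) + 1))) fun ξ hξ ↦ ?_
    rw [mem_closedBall_zero_iff]
    simpa [en_eq_norm] using en_le_of_psiLP_ne_zero hχ (Complex.ofReal_ne_zero.1 hξ)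

/-- A self-map of `ℝ × ℝ`, seen as a self-map of the Euclidean plane. -/
def planeMap (S : ℝ × ℝ → ℝ × ℝ) (x : Plane) : Plane := WithLp.toLp 2 (S x.ofLp)

variable (S : ℝ × ℝ → ℝ × ℝ)

lemma fderiv_planeMap (x : Plane) :
    fderiv ℝ (planeMap S) x =
      ((WithLp.prodContinuousLinearEquiv 2 ℝ ℝ ℝ).symm : (ℝ × ℝ) →L[ℝ] Plane) ∘L
        fderiv ℝ S x.ofLp ∘L (WithLp.prodContinuousLinearEquiv 2 ℝ ℝ ℝ : Plane →L[ℝ] ℝ × ℝ) := by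
  let e := WithLp.prodContinuousLinearEquiv 2 ℝ ℝ ℝ
  have : planeMap S = e.symm ∘ S ∘ e := rfl
  rw [this, e.symm.comp_fderiv, e.comp_right_fderiv]
  rfl

lemma det_eq_det2 (A : (ℝ × ℝ) →L[ℝ] (ℝ × ℝ)) : A.det = det2 A := by
  unfold ContinuousLinearMap.det
  rw [← LinearMap.det_toMatrix (Module.Basis.finTwoProd ℝ), Matrix.det_fin_two]
  simp [LinearMap.toMatrix_apply, det2]
  ring

lemma det_fderiv_planeMap (x : Plane) :
    (fderiv ℝ (planeMap S) x).det = det2 (fderiv ℝ S x.ofLp) := by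
  rw [fderiv_planeMap, ← det_eq_det2]
  exact LinearMap.det_conj _ (WithLp.prodContinuousLinearEquiv 2 ℝ ℝ ℝ).symm.toLinearEquiv

lemma isLinearMap_transApp (A : (ℝ × ℝ) →L[ℝ] (ℝ × ℝ)) : IsLinearMap ℝ (transApp A) where
  map_add p q := by ext <;> simp only [transApp, Prod.fst_add, Prod.snd_add] <;> ring
  map_smul c p := by
    ext <;> simp only [transApp, Prod.smul_fst, Prod.smul_snd, smul_eq_mul] <;> ring

lemma inner_toLp_transApp (A : (ℝ × ℝ) →L[ℝ] (ℝ × ℝ)) (p v : ℝ × ℝ) :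
    ⟪WithLp.toLp 2 (transApp A p), WithLp.toLp 2 v⟫ =
      ⟪WithLp.toLp 2 p, WithLp.toLp 2 (A v)⟫ := by
  have hv : v = v.1 • (1, 0) + v.2 • (0, 1) := by ext <;> simp
  conv_rhs => rw [hv, map_add, map_smul, map_smul]
  simp [WithLp.prod_inner_apply, transApp]
  ring

lemma phaseDeriv_planeMap (p q v w : Plane) :
    phaseDeriv (planeMap S) p q v w =
      ⟪WithLp.toLp 2 (transApp (fderiv ℝ S w.ofLp) p.ofLp + q.ofLp), v⟫ := by
  rw [WithLp.toLp_add, inner_add_left, phaseDeriv, fderiv_planeMap]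
  congr 1
  exact (inner_toLp_transApp _ p.ofLp v.ofLp).symm

lemma exists_phaseDeriv_planeMap_ne_zero {p q w : Plane}
    (h : transApp (fderiv ℝ S w.ofLp) p.ofLp + q.ofLp ≠ 0) :
    ∃ v, phaseDeriv (planeMap S) p q v w ≠ 0 := by
  refine ⟨WithLp.toLp 2 (transApp (fderiv ℝ S w.ofLp) p.ofLp + q.ofLp), ?_⟩
  rw [phaseDeriv_planeMap]
  exact inner_self_ne_zero.2 fun h₀ ↦ h (congrArg WithLp.ofLp h₀)

end EuclideanPlane

section TransferOperator

variable {r m n : ℕ} {η δ : ℝ} {χ : ℝ → ℝ} {Θ Θ' : Polarization} {τ σ : Bool}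
  {K : Set (ℝ × ℝ)} {h : ℝ × ℝ → ℝ} {S : ℝ × ℝ → ℝ × ℝ} {u : ℝ × ℝ → ℂ}

lemma Rset_subset_Icc_prod : Rset η δ ⊆ Icc (-η) η ×ˢ Icc δ (2 * δ) :=
  prod_mono Ioo_subset_Icc_self Ioo_subset_Icc_self

lemma Lop_eq_mul (hh : support h ⊆ K) : Lop K h S u = fun x ↦ (h x : ℂ) * u (S x) :=
  indicator_eq_self.2 fun x hx ↦ hh fun h₀ ↦ hx (by simp [h₀])

lemma TransferHyp.isCompact_ofLp_preimage (hT : TransferHyp r η δ Θ Θ' K h S) :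
    IsCompact (WithLp.ofLp ⁻¹' K : Set Plane) :=
  (WithLp.homeomorphProd 2 ℝ ℝ).isCompact_preimage.2 <|
    (isCompact_Icc.prod isCompact_Icc).of_isClosed_subset hT.1 (hT.2.1.trans Rset_subset_Icc_prod)

lemma TransferHyp.contDiff_weight (hT : TransferHyp r η δ Θ Θ' K h S) :
    ContDiff ℝ (r - 1 : ℕ) fun x : Plane ↦ h x.ofLp :=
  hT.2.2.1.comp (WithLp.prodContinuousLinearEquiv 2 ℝ ℝ ℝ).contDiff

lemma TransferHyp.support_weight_subset (hT : TransferHyp r η δ Θ Θ' K h S) :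
    (support fun x : Plane ↦ h x.ofLp) ⊆ WithLp.ofLp ⁻¹' K :=
  fun _ hx ↦ hT.2.2.2.1 hx

lemma TransferHyp.exists_contDiffOn_planeMap (hT : TransferHyp r η δ Θ Θ' K h S) :
    ∃ U : Set Plane, IsOpen U ∧ WithLp.ofLp ⁻¹' K ⊆ U ∧ ContDiffOn ℝ r (planeMap S) U ∧
      InjOn (planeMap S) (WithLp.ofLp ⁻¹' K) ∧
      ∀ w ∈ WithLp.ofLp ⁻¹' K, (fderiv ℝ (planeMap S) w).det ≠ 0 := by
  obtain ⟨-, -, -, -, ⟨U, hU, hKU, hS, hinj, hdet⟩, -⟩ := hT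
  let e := WithLp.prodContinuousLinearEquiv 2 ℝ ℝ ℝ
  refine ⟨e ⁻¹' U, hU.preimage e.continuous, preimage_mono hKU, ?_, ?_, fun w hw ↦ ?_⟩
  · exact e.symm.contDiff.comp_contDiffOn (hS.comp e.contDiff.contDiffOn (mapsTo_preimage e U))
  · exact fun x hx y hy hxy ↦
      WithLp.ofLp_injective 2 (hinj (hKU hx) (hKU hy) (WithLp.toLp_injective 2 hxy))
  · rw [det_fderiv_planeMap]
    exact hdet _ (hKU hw)

lemma eLpNorm_psiD_Lop_le {B : ℝ} (hχ : ChiOK χ) (hT : TransferHyp r η δ Θ Θ' K h S)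
    (hu : Integrable u) (hB₀ : 0 ≤ B)
    (hB : ∀ f φ : Plane → ℂ, MemL2c f → MemL2c φ →
      (∀ ξ ∈ support f, psiLP χ Θ m τ (-ξ.ofLp) ≠ 0) →
      (∀ ζ ∈ support φ, psiLP χ Θ' n σ ζ.ofLp ≠ 0) →
      ‖transferForm (planeMap S) (fun x ↦ h x.ofLp) f φ‖ ≤
        B * lpNorm f 2 volume * lpNorm φ 2 volume) :
    eLpNorm (psiD χ Θ' n σ (Lop K h S (psiD χ Θ m τ u))) 2 volume ≤
      ENNReal.ofReal B * eLpNorm (psiD χ Θ m τ u) 2 volume := by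
  obtain ⟨U, -, hKU, hS, -, -⟩ := hT.exists_contDiffOn_planeMap
  have hu' : Integrable fun x : Plane ↦ u x.ofLp :=
    (WithLp.volume_preserving_ofLp ℝ ℝ).integrable_comp_of_integrable hu
  rw [← eLpNorm_comp_ofLp, ← eLpNorm_comp_ofLp (psiD χ Θ m τ u), psiD_ofLp, psiD_ofLp,
    Lop_eq_mul hT.2.2.2.1]
  convert eLpNorm_multiplier_transfer_le hT.isCompact_ofLp_preimage (hS.continuousOn.mono hKU)
    hT.contDiff_weight.continuous hT.support_weight_subset hu' (isUnitMultiplier_psiLP hχ Θ m τ)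
    (isUnitMultiplier_psiLP hχ Θ' n σ) hB₀ fun f φ hf hφ hfψ hφψ ↦ ?_ using 7 with ζ x
  · exact congrArg _ (congrFun (psiD_ofLp χ Θ m τ u) (planeMap S x))
  · exact hB f φ hf hφ (fun ξ hξ ↦ Complex.ofReal_ne_zero.1 (hfψ ξ hξ))
      fun ζ hζ ↦ Complex.ofReal_ne_zero.1 (hφψ hζ)

theorem exists_eLpNorm_psiD_Lop_le (hχ : ChiOK χ) (hr : 1 ≤ r)
    (hT : TransferHyp r η δ Θ Θ' K h S) :
    ∃ C ≥ 0, ∀ u, Integrable u → ∀ m n τ σ,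
      eLpNorm (psiD χ Θ' n σ (Lop K h S (psiD χ Θ m τ u))) 2 volume ≤
        ENNReal.ofReal C * eLpNorm (psiD χ Θ m τ u) 2 volume := by
  obtain ⟨U, hU, hKU, hS, hinj, hdet⟩ := hT.exists_contDiffOn_planeMap
  obtain ⟨C, hC₀, hC⟩ := exists_norm_transferForm_le hT.isCompact_ofLp_preimage hU hKU
    (hS.of_le (by exact_mod_cast hr)) hinj hdet hT.contDiff_weight.continuous
    hT.support_weight_subset
  exact ⟨C, hC₀, fun u hu m n τ σ ↦
    eLpNorm_psiD_Lop_le hχ hT hu hC₀ fun f φ hf hφ _ _ ↦ hC f φ hf hφ⟩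

theorem exists_eLpNorm_psiD_Lop_le_of_separated {k : ℕ} {P : Set ((ℝ × ℝ) × (ℝ × ℝ))}
    (hχ : ChiOK χ) (hT : TransferHyp (k + 1) η δ Θ Θ' K h S) (hP : IsCompact P)
    (hsep : ∀ z ∈ P, ∀ w ∈ K, transApp (fderiv ℝ S w) z.1 ≠ z.2) :
    ∃ C ≥ 0, ∀ M > 0, ∀ u, Integrable u → ∀ m n τ σ,
      (∀ ξ ζ, psiLP χ Θ m τ ξ ≠ 0 → psiLP χ Θ' n σ ζ ≠ 0 → (M⁻¹ • ξ, M⁻¹ • ζ) ∈ P) →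
      eLpNorm (psiD χ Θ' n σ (Lop K h S (psiD χ Θ m τ u))) 2 volume ≤
        ENNReal.ofReal (C * (M ^ k)⁻¹) * eLpNorm (psiD χ Θ m τ u) 2 volume := by
  obtain ⟨U, hU, hKU, hS, hinj, hdet⟩ := hT.exists_contDiffOn_planeMap
  let e := WithLp.homeomorphProd 2 ℝ ℝ
  have hP' : IsCompact ((e.trans (Homeomorph.neg (ℝ × ℝ))).prodCongr e ⁻¹' P) :=
    (Homeomorph.isCompact_preimage _).2 hP
  have hne (z) (hz : z ∈ (e.trans (Homeomorph.neg (ℝ × ℝ))).prodCongr e ⁻¹' P) (w : Plane)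
      (hw : w ∈ WithLp.ofLp ⁻¹' K) : ∃ v, phaseDeriv (planeMap S) z.1 z.2 v w ≠ 0 := by
    refine exists_phaseDeriv_planeMap_ne_zero S fun h₀ ↦ ?_
    exact hsep _ hz _ hw
      (((isLinearMap_transApp _).map_neg _).trans (neg_eq_of_add_eq_zero_right h₀))
  obtain ⟨C, hC₀, hC⟩ := exists_norm_transferForm_mul_pow_le hT.isCompact_ofLp_preimage hU hKU hS
    hinj hdet hP' hne hT.contDiff_weight hT.support_weight_subset
  refine ⟨C, hC₀, fun M hM u hu m n τ σ hMP ↦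
    eLpNorm_psiD_Lop_le hχ hT hu (by positivity) fun f φ hf hφ hfψ hφψ ↦ ?_⟩
  have hmem (ξ) (hξ : ξ ∈ support f) (ζ) (hζ : ζ ∈ support φ) :
      (M⁻¹ • ξ, M⁻¹ • ζ) ∈ (e.trans (Homeomorph.neg (ℝ × ℝ))).prodCongr e ⁻¹' P := by
    have hM := hMP _ _ (hfψ ξ hξ) (hφψ ζ hζ)
    rw [smul_neg] at hM
    exact hM
  have hbound := hC M hM f φ hf hφ hmem
  rw [← le_div_iff₀ (by positivity)] at hbound
  exact hbound.trans_eq (by ring)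

end TransferOperator

section FrequencyGeometry

variable {χ : ℝ → ℝ} {Θ Θ' : Polarization} {μ ν : ℤ} {A : (ℝ × ℝ) →L[ℝ] (ℝ × ℝ)}
  {z : (ℝ × ℝ) × (ℝ × ℝ)}

lemma continuous_transApp : Continuous (transApp A) := by unfold transApp; fun_prop

lemma isOpenMap_transApp (hA : ∀ v, transApp A v = 0 → v = 0) : IsOpenMap (transApp A) := by
  let T := (isLinearMap_transApp A).mk'
  have hinj : Injective T := (injective_iff_map_eq_zero T).2 hA
  exact T.isOpenMap_of_finiteDimensional (LinearMap.injective_iff_surjective.1 hinj)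

lemma en_transApp_le_LambdaS_mul {K : Set (ℝ × ℝ)} {S : ℝ × ℝ → ℝ × ℝ} {B : ℝ} (hB₀ : 0 ≤ B)
    (hB : ∀ x ∈ K, ∀ v, en (transApp (fderiv ℝ S x) v) ≤ B * en v) {w : ℝ × ℝ} (hw : w ∈ K)
    {v : ℝ × ℝ} (hv : transApp (fderiv ℝ S w) v ∉ Θ'.Cm) :
    en (transApp (fderiv ℝ S w) v) ≤ LambdaS K S Θ' * en v := by
  rcases (en_nonneg v).eq_or_lt with h₀ | hpos
  · simpa [← h₀] using hB w hw v
  · rw [← div_le_iff₀ hpos]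
    refine le_csSup ⟨B, ?_⟩ ⟨w, hw, v, hv, rfl⟩
    rintro _ ⟨x, hx, v, -, rfl⟩
    exact div_le_of_le_mul₀ (en_nonneg _) hB₀ (hB x hx v)

lemma en_transApp_le_of_mem_closure {L : ℝ} {C : Set (ℝ × ℝ)}
    (hA : ∀ v, transApp A v = 0 → v = 0)
    (hL : ∀ v, transApp A v ∈ C → en (transApp A v) ≤ L * en v) {v : ℝ × ℝ}
    (hv : transApp A v ∈ closure C) : en (transApp A v) ≤ L * en v := by
  have hclosed : IsClosed {v | en (transApp A v) ≤ L * en v} :=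
    isClosed_le (continuous_en.comp continuous_transApp) (continuous_const.mul continuous_en)
  exact closure_minimal hL hclosed
    ((isOpenMap_transApp hA).preimage_closure_subset_closure_preimage hv)

/-- The closed cone of pairs `(ξ, ζ)` of frequencies that cannot be related by `ζ = (DS)ᵀ ξ`: the
sizes of `ξ` and `ζ` are too different, or the direction of `ζ` is excluded by that of `ξ`, or `ζ`
is longer than `Λ(S,Θ',K)` allows outside `C'₋`. -/
def mismatchCone (Θ Θ' : Polarization) (μ ν : ℤ) : Set ((ℝ × ℝ) × (ℝ × ℝ)) :=
  {z | en z.2 ≤ 2 ^ (5 - μ) * en z.1} ∪ {z | 2 ^ (μ - 5) * en z.1 ≤ en z.2} ∪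
    closure Θ.Cpᶜ ×ˢ closure Θ'.Cmᶜ ∪
    {z | 2 ^ (ν + 5) * en z.1 ≤ en z.2 ∧ z.2 ∈ closure Θ'.Cmᶜ}

lemma isClosed_mismatchCone : IsClosed (mismatchCone Θ Θ' μ ν) := by
  have h₁ : Continuous fun z : (ℝ × ℝ) × (ℝ × ℝ) ↦ en z.1 := continuous_en.comp continuous_fst
  have h₂ : Continuous fun z : (ℝ × ℝ) × (ℝ × ℝ) ↦ en z.2 := continuous_en.comp continuous_snd
  exact (((isClosed_le h₂ (h₁.const_mul _)).union (isClosed_le (h₁.const_mul _) h₂)).union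
    (isClosed_closure.prod isClosed_closure)).union
    ((isClosed_le (h₁.const_mul _) h₂).inter (isClosed_closure.preimage continuous_snd))

lemma smul_mem_closure_compl {C : Set (ℝ × ℝ)} (hC : ∀ (c : ℝ) v, v ∈ C → c • v ∈ C) {c : ℝ}
    (hc : c ≠ 0) {v : ℝ × ℝ} (hv : v ∈ closure Cᶜ) : c • v ∈ closure Cᶜ := by
  refine map_mem_closure (continuous_const_smul c) hv fun x hx hcx ↦ hx ?_
  simpa [inv_smul_smul₀ hc] using hC c⁻¹ _ hcx

lemma smul_mem_mismatchCone {c : ℝ} (hc : 0 < c) (hz : z ∈ mismatchCone Θ Θ' μ ν) :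
    c • z ∈ mismatchCone Θ Θ' μ ν := by
  have hscale (a : ℝ) (v w : ℝ × ℝ) (h : a * en v ≤ en w) : a * en (c • v) ≤ en (c • w) := by
    rw [en_smul, en_smul, mul_left_comm]
    gcongr
  rcases hz with ((hz | hz) | hz) | hz
  · refine Or.inl (Or.inl (Or.inl ?_))
    rw [mem_ofPred_eq] at hz ⊢
    rw [Prod.smul_fst, Prod.smul_snd, en_smul, en_smul, mul_left_comm]
    gcongr
  · exact Or.inl (Or.inl (Or.inr (hscale _ _ _ hz)))
  · exact Or.inl (Or.inr ⟨smul_mem_closure_compl Θ.cone_p hc.ne' hz.1,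
      smul_mem_closure_compl Θ'.cone_m hc.ne' hz.2⟩)
  · exact Or.inr ⟨hscale _ _ _ hz.1, smul_mem_closure_compl Θ'.cone_m hc.ne' hz.2⟩

lemma transApp_ne_of_mem_mismatchCone
    (hlower : ∀ v, (2 : ℝ) ^ (-μ + 6) * en v ≤ en (transApp A v))
    (hupper : ∀ v, en (transApp A v) ≤ (2 : ℝ) ^ (μ - 6) * en v)
    (hcone : Csub (transApp A '' (univ \ Θ.Cp)) Θ'.Cm)
    (hΛ : ∀ v, transApp A v ∈ closure Θ'.Cmᶜ → en (transApp A v) ≤ (2 : ℝ) ^ ν * en v)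
    (hz : z ∈ mismatchCone Θ Θ' μ ν) (hz₀ : z ≠ 0) : transApp A z.1 ≠ z.2 := by
  obtain ⟨p, q⟩ := z
  intro hq
  obtain rfl : transApp A p = q := hq
  have hp : 0 < en p := (en_nonneg p).lt_of_ne' fun h₀ ↦ hz₀ <| by
    rw [en_eq_zero.1 h₀, (isLinearMap_transApp A).map_zero, Prod.mk_zero_zero]
  have hlt {a b : ℤ} (hab : a < b) : (2 : ℝ) ^ a * en p < 2 ^ b * en p := by
    gcongr
    exact one_lt_two
  rcases hz with ((hz | hz) | ⟨hp', hq'⟩) | ⟨hz, hq'⟩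
  · exact ((hlower p).trans hz).not_gt (hlt (by lia))
  · exact (hz.trans (hupper p)).not_gt (hlt (by lia))
  · have hq : transApp A p ≠ 0 := fun h₀ ↦
      (mul_pos (by positivity) hp).not_ge ((hlower p).trans_eq (en_eq_zero.2 h₀))
    rw [closure_compl] at hq'
    refine hq' (hcone ⟨image_closure_subset_closure_image continuous_transApp ⟨p, ?_, rfl⟩, hq⟩)
    rwa [← compl_eq_univ_sdiff]
  · exact (hz.trans (hΛ p hq')).not_gt (hlt (by lia))

lemma mem_mismatchCone_of_not_hook (hχ : ChiOK χ) {m n : ℕ} {τ σ : Bool} (hμ : 0 ≤ μ)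
    (hmn : μ < max m n) (hook : ¬ Hook μ ν m τ n σ) (hξ : psiLP χ Θ m τ z.1 ≠ 0)
    (hζ : psiLP χ Θ' n σ z.2 ≠ 0) : z ∈ mismatchCone Θ Θ' μ ν := by
  have hm := en_le_of_psiLP_ne_zero hχ hξ
  have hn := en_le_of_psiLP_ne_zero hχ hζ
  have hscale {v w : ℝ × ℝ} {a b c : ℤ} (hv : en v ≤ 2 ^ a) (hw : 2 ^ b ≤ en w) (h : c + a ≤ b) :
      (2 : ℝ) ^ c * en v ≤ en w := by
    calc (2 : ℝ) ^ c * en v ≤ 2 ^ c * 2 ^ a := by gcongr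
      _ = 2 ^ (c + a) := (zpow_add₀ two_ne_zero _ _).symm
      _ ≤ 2 ^ b := zpow_le_zpow_right₀ one_le_two h
      _ ≤ en w := hw
  by_cases hlow : (n : ℤ) < m - μ
  · have hle := hscale hn (le_en_of_psiLP_ne_zero hχ (by lia) hξ) (c := μ - 5) (by lia)
    refine Or.inl (Or.inl (Or.inl ?_))
    rw [mem_ofPred_eq, ← neg_sub, zpow_neg]
    exact (le_inv_mul_iff₀ (by positivity)).2 hle
  by_cases hhigh : (m : ℤ) + μ < n
  · exact Or.inl (Or.inl (Or.inr (hscale hm (le_en_of_psiLP_ne_zero hχ (by lia) hζ) (by lia))))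
  simp only [Hook, not_or, not_and] at hook
  obtain ⟨hpos, hneg⟩ := hook
  obtain rfl : σ = true := by
    rw [← Bool.not_eq_false]
    exact fun hσ ↦ hneg hσ (by lia) (by lia)
  have hn₀ : n ≠ 0 := by cases τ <;> lia
  have hζ' : z.2 ∈ closure Θ'.Cmᶜ := subset_closure (notMem_Cm_of_psiLP_ne_zero hχ hn₀ hζ)
  cases τ with
  | false =>
    exact Or.inl (Or.inr ⟨subset_closure (notMem_Cp_of_psiLP_ne_zero hχ (by lia) hξ), hζ'⟩)
  | true =>
    specialize hpos rfl rfl (by lia)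
    exact Or.inr ⟨hscale hm (le_en_of_psiLP_ne_zero hχ hn₀ hζ) (by lia), hζ'⟩

/-- The frequency pairs of comparable size `1` in the cone `mismatchCone Θ Θ' μ ν`. -/
def mismatchShell (Θ Θ' : Polarization) (μ ν : ℤ) : Set ((ℝ × ℝ) × (ℝ × ℝ)) :=
  mismatchCone Θ Θ' μ ν ∩ {z | max (en z.1) (en z.2) ∈ Set.Icc (1 / 2) 2}

lemma isCompact_mismatchShell : IsCompact (mismatchShell Θ Θ' μ ν) := by
  have hmax : Continuous fun z : (ℝ × ℝ) × (ℝ × ℝ) ↦ max (en z.1) (en z.2) :=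
    (continuous_en.comp continuous_fst).max (continuous_en.comp continuous_snd)
  refine (isCompact_closedBall 0 2).of_isClosed_subset
    (isClosed_mismatchCone.inter (isClosed_Icc.preimage hmax)) fun z hz ↦ ?_
  rw [mem_closedBall_zero_iff, Prod.norm_def]
  exact (max_le_max (norm_le_en _) (norm_le_en _)).trans hz.2.2

lemma inv_two_pow_smul_mem_mismatchShell (hχ : ChiOK χ) {m n : ℕ} {τ σ : Bool} (hμ : 0 ≤ μ)
    (hmn : μ < max m n) (hook : ¬ Hook μ ν m τ n σ) (hξ : psiLP χ Θ m τ z.1 ≠ 0)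
    (hζ : psiLP χ Θ' n σ z.2 ≠ 0) : ((2 : ℝ) ^ max m n)⁻¹ • z ∈ mismatchShell Θ Θ' μ ν := by
  refine ⟨smul_mem_mismatchCone (by positivity)
    (mem_mismatchCone_of_not_hook hχ hμ hmn hook hξ hζ), ?_⟩
  have hupper {l : ℕ} {v : ℝ × ℝ} (hl : l ≤ max m n) (hv : en v ≤ 2 ^ ((l : ℤ) + 1)) :
      en v ≤ 2 ^ max m n * 2 := by
    rw [← pow_succ, ← zpow_natCast]
    exact hv.trans (zpow_le_zpow_right₀ one_le_two (by lia))
  have hlower {v : ℝ × ℝ} (hv : 2 ^ (((max m n : ℕ) : ℤ) - 1) ≤ en v) :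
      2 ^ max m n * (1 / 2) ≤ en v := by
    rwa [zpow_sub_one₀ two_ne_zero, zpow_natCast, inv_eq_one_div] at hv
  rw [mem_ofPred_eq, Prod.smul_fst, Prod.smul_snd, en_smul, en_smul,
    ← mul_max_of_nonneg _ _ (abs_nonneg _), abs_of_pos (by positivity), Set.mem_Icc,
    le_inv_mul_iff₀ (by positivity), inv_mul_le_iff₀ (by positivity)]
  refine ⟨?_, max_le (hupper (le_max_left _ _) (en_le_of_psiLP_ne_zero hχ hξ))
    (hupper (le_max_right _ _) (en_le_of_psiLP_ne_zero hχ hζ))⟩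
  rcases max_choice m n with hmax | hmax
  · refine le_max_of_le_left (hlower ?_)
    rw [hmax]
    exact le_en_of_psiLP_ne_zero hχ (by lia) hξ
  · refine le_max_of_le_right (hlower ?_)
    rw [hmax]
    exact le_en_of_psiLP_ne_zero hχ (by lia) hζ

end FrequencyGeometry

lemma CrSupp.integrable {r : ℕ} {η δ : ℝ} {u : ℝ × ℝ → ℂ} (hu : CrSupp r η δ u) :
    Integrable u :=
  hu.1.continuous.integrable_of_hasCompactSupport <|
    .of_support_subset_isCompact (isCompact_Icc.prod isCompact_Icc)
      (hu.2.trans Rset_subset_Icc_prod)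

lemma nonneg_of_en_transApp_bounds {μ : ℤ} {A : (ℝ × ℝ) →L[ℝ] (ℝ × ℝ)}
    (hA : ∀ v, (2 : ℝ) ^ (-μ + 6) * en v ≤ en (transApp A v) ∧
      en (transApp A v) ≤ (2 : ℝ) ^ (μ - 6) * en v) : 0 ≤ μ := by
  have hone : en (1, 0) = 1 := by simp [en]
  have hle := (hA (1, 0)).1.trans (hA (1, 0)).2
  rw [hone, mul_one, mul_one, zpow_le_zpow_iff_right₀ one_lt_two] at hle
  lia

lemma TransferHyp.transApp_ne_of_mem_mismatchShell {r : ℕ} {η δ : ℝ} {Θ Θ' : Polarization}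
    {K : Set (ℝ × ℝ)} {h : ℝ × ℝ → ℝ} {S : ℝ × ℝ → ℝ × ℝ} {μ ν : ℤ}
    (hT : TransferHyp r η δ Θ Θ' K h S)
    (hμ : ∀ x ∈ K, ∀ ξ, (2 : ℝ) ^ (-μ + 6) * en ξ ≤ en (transApp (fderiv ℝ S x) ξ) ∧
      en (transApp (fderiv ℝ S x) ξ) ≤ (2 : ℝ) ^ (μ - 6) * en ξ)
    (hΛ : LambdaS K S Θ' ≤ (2 : ℝ) ^ ν) {z : (ℝ × ℝ) × (ℝ × ℝ)} (hz : z ∈ mismatchShell Θ Θ' μ ν)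
    {w : ℝ × ℝ} (hw : w ∈ K) : transApp (fderiv ℝ S w) z.1 ≠ z.2 := by
  have hinj (v : ℝ × ℝ) (hv : transApp (fderiv ℝ S w) v = 0) : v = 0 := by
    have hle := (hμ w hw v).1
    rw [hv, en_eq_zero.2 rfl] at hle
    exact en_eq_zero.1 ((nonpos_of_mul_nonpos_right hle (by positivity)).antisymm (en_nonneg v))
  have hΛ' (v : ℝ × ℝ) (hv : transApp (fderiv ℝ S w) v ∈ Θ'.Cmᶜ) :
      en (transApp (fderiv ℝ S w) v) ≤ (2 : ℝ) ^ ν * en v :=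
    (en_transApp_le_LambdaS_mul (by positivity) (fun x hx v ↦ (hμ x hx v).2) hw hv).trans
      (mul_le_mul_of_nonneg_right hΛ (en_nonneg v))
  refine transApp_ne_of_mem_mismatchCone (fun v ↦ (hμ w hw v).1) (fun v ↦ (hμ w hw v).2)
    (hT.2.2.2.2.2 w hw) (fun v ↦ en_transApp_le_of_mem_closure hinj hΛ') hz.1 ?_
  rintro rfl
  have hmax := hz.2.1
  norm_num [en_eq_zero.2] at hmax

theorem statement12_general (r : ℕ) (hr : 1 ≤ r) (η δ : ℝ) (χ : ℝ → ℝ) (hχ : ChiOK χ)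
    (Θ Θ' : Polarization) (K : Set (ℝ × ℝ)) (h : ℝ × ℝ → ℝ) (S : ℝ × ℝ → ℝ × ℝ)
    (hT : TransferHyp r η δ Θ Θ' K h S)
    (μ ν : ℤ)
    (hμ : ∀ x ∈ K, ∀ ξ : ℝ × ℝ,
      (2 : ℝ) ^ (-μ + 6) * en ξ ≤ en (transApp (fderiv ℝ S x) ξ) ∧
        en (transApp (fderiv ℝ S x) ξ) ≤ (2 : ℝ) ^ (μ - 6) * en ξ)
    (hΛ : LambdaS K S Θ' ≤ (2 : ℝ) ^ ν) :
    ∃ C : ℝ≥0, ∀ u : ℝ × ℝ → ℂ, Integrable u →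
      ∀ (m n : ℕ) (τ σ : Bool), ¬ Hook μ ν m τ n σ →
        eLpNorm (psiD χ Θ' n σ (Lop K h S (psiD χ Θ m τ u))) 2 volume ≤
          C * ENNReal.ofReal ((2 : ℝ) ^ (-((r : ℤ) - 1) * (max m n : ℤ))) *
            eLpNorm (psiD χ Θ m τ u) 2 volume := by
  rcases K.eq_empty_or_nonempty with rfl | hK
  · exact ⟨0, fun u _ m n τ σ _ ↦ by
      unfold psiD invFT
      simp [Lop, FT]⟩
  obtain ⟨C₁, hC₁, hbounded⟩ := exists_eLpNorm_psiD_Lop_le hχ hr hT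
  obtain ⟨k, rfl⟩ := Nat.exists_eq_add_of_le' hr
  obtain ⟨C₂, hC₂, hdecay⟩ := exists_eLpNorm_psiD_Lop_le_of_separated hχ hT
    (isCompact_mismatchShell (μ := μ) (ν := ν)) fun z hz w hw ↦
      hT.transApp_ne_of_mem_mismatchShell hμ hΛ hz hw
  refine ⟨(C₁ * (2 ^ μ.toNat) ^ k + C₂).toNNReal, fun u hu m n τ σ hook ↦ ?_⟩
  set M : ℝ := 2 ^ max m n
  have hzpow : (2 : ℝ) ^ (-(((k + 1 : ℕ) : ℤ) - 1) * (max m n : ℤ)) = (M ^ k)⁻¹ := by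
    rw [← pow_mul, ← zpow_natCast, ← zpow_neg]
    congr 1
    push_cast
    ring
  rw [hzpow, ENNReal.ofNNReal_toNNReal, ← ENNReal.ofReal_mul (by positivity), add_mul]
  rcases le_or_gt (max m n) μ.toNat with hmn | hmn
  · have hM : M ≤ 2 ^ μ.toNat := pow_le_pow_right₀ one_le_two hmn
    refine (hbounded u hu m n τ σ).trans ?_
    gcongr
    calc C₁ = C₁ * M ^ k * (M ^ k)⁻¹ := (mul_inv_cancel_right₀ (by positivity) _).symm
      _ ≤ C₁ * (2 ^ μ.toNat) ^ k * (M ^ k)⁻¹ := by gcongr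
      _ ≤ _ := le_add_of_nonneg_right (by positivity)
  · refine (hdecay M (by positivity) u hu m n τ σ fun ξ ζ hξ hζ ↦ ?_).trans ?_
    · have hμ₀ : 0 ≤ μ := nonneg_of_en_transApp_bounds (hμ _ hK.some_mem)
      exact inv_two_pow_smul_mem_mismatchShell (z := (ξ, ζ)) hχ hμ₀ (by lia) hook hξ hζ
    · gcongr
      exact le_add_of_nonneg_left (by positivity)

/-- Lemma B.1. In the transfer-operator setting, with `μ` and `ν` as
described, there is `C` such that for all `u ∈ C^r(R)` and all `(m,τ) ↪̸ (n,σ)`: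
`‖ψ_{Θ',n,σ}(D)(L(u_{Θ,m,τ}))‖_{L²} ≤ C·2^{-(r-1)max{m,n}}·‖u_{Θ,m,τ}‖_{L²}`. -/
theorem statement12 (r : ℕ) (hr : 3 ≤ r) (η δ ε : ℝ) (hη : 0 < η) (hδ : 0 < δ)
    (hε₁ : 0 < ε) (hε₂ : ε < 1 / 2) (χ : ℝ → ℝ) (hχ : ChiOK χ)
    (Θ Θ' : Polarization) (K : Set (ℝ × ℝ)) (h : ℝ × ℝ → ℝ) (S : ℝ × ℝ → ℝ × ℝ)
    (hT : TransferHyp r η δ Θ Θ' K h S)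
    (μ ν : ℤ)
    (hμ : ∀ x ∈ K, ∀ ξ : ℝ × ℝ,
      (2 : ℝ) ^ (-μ + 6) * en ξ ≤ en (transApp (fderiv ℝ S x) ξ) ∧
        en (transApp (fderiv ℝ S x) ξ) ≤ (2 : ℝ) ^ (μ - 6) * en ξ)
    (hν : ν ≤ μ - 6)
    (hΛ₁ : (2 : ℝ) ^ (ν - 1) < LambdaS K S Θ') (hΛ₂ : LambdaS K S Θ' ≤ (2 : ℝ) ^ ν) :
    ∃ C : ℝ≥0, ∀ u : ℝ × ℝ → ℂ, CrSupp r η δ u →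
      ∀ (m n : ℕ) (τ σ : Bool), ¬ Hook μ ν m τ n σ →
        eLpNorm (psiD χ Θ' n σ (Lop K h S (psiD χ Θ m τ u))) 2 volume ≤
          C * ENNReal.ofReal ((2 : ℝ) ^ (-((r : ℤ) - 1) * (max m n : ℤ))) *
            eLpNorm (psiD χ Θ m τ u) 2 volume := by
  obtain ⟨C, hC⟩ := statement12_general r (by lia) η δ χ hχ Θ Θ' K h S hT μ ν hμ hΛ₂
  exact ⟨C, fun u hu ↦ hC u hu.integrable⟩

end AngleMult
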